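/- Let Y ⊂ P^{n_1} × P^{n_2} be an irreducible multiprojective curve (intrinsic dimension 1). Then the degree of its image under the Segre embedding equals Deg_Y(1,0) + Deg_Y(0,1), i.e., the total cardinality of a witness collection for Y. -/

import Mathlib

/-!
A hyperplane section of the Segre image of `Y` is the divisor on `Y` of a bilinear form, and the
divisor of a product of two linear forms, one on each factor, is the union of the divisors of the
two forms. The theorem says that the general bilinear form has as many zeros on `Y` as the general
product of linear forms.

To compare the two, the curve is replaced by a plane model (`IsModel`, `exists_model`): all but
finitely many points of `Y` are parametrized by a smooth affine plane curve `P = 0`, `g ≠ 0`, with a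
locally continuous inverse. The intrinsic dimension enters through a linear form on one factor with
finite fibres on each chart; by Chevalley's theorem, every function is algebraically related to it
(`exists_relation`), so the function field of a chart has transcendence degree one, and the
primitive element theorem gives the plane curve (`affine_model`).

A bilinear form is called good (`good`) if its divisor meets `Y` transversally and only at points
that are covered by the plane model. Transversality is expressed by the Hamiltonian derivation of
`P`. The implicit function theorem, together with the compactness of the normalized cone over `Y`,
shows that good forms are an open set on which the number of zeros is locally constant
(`good_locally_constant`). A pencil containing a good form has only finitely many members that are
not good (`good_line`, based on the Wronskian argument of `pencil`). Hence good forms are dense, and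
as the complement of a finite set in `ℂ` is connected, they all have the same number of zeros on `Y`
(`good_const`).

Some product of two linear forms is good (`exists_tens_good`). Transversality makes the divisors of
its factors disjoint on `Y`, so the degree is the sum of the numbers of zeros of the two forms, and
these are the degrees of `Y` in the two directions (`deg_eq`). If a direction is not in the
multidimension, the corresponding number of zeros is `0`.
-/

open scoped BigOperators

namespace MultiProj

variable {ι : Type*} [Fintype ι] [DecidableEq ι]

/-- Multiprojective space: a product of complex projective spaces `ℙ^{n i}`. -/
abbrev PStack (n : ι → ℕ) := (i : ι) → Projectivization ℂ (Fin (n i + 1) → ℂ)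

/-- A linear form (given by its coefficient vector) vanishes at a point of the
projectivization of a coordinate space. -/
def PLinVanish {κ : Type*} [Fintype κ] (c : κ → ℂ)
    (p : Projectivization ℂ (κ → ℂ)) : Prop :=
  ∀ (v : κ → ℂ) (hv : v ≠ 0), Projectivization.mk ℂ v hv = p → ∑ a, c a * v a = 0

/-- A polynomial in the multihomogeneous coordinates vanishes at a point of the
multiprojective space, i.e. at every system of homogeneous representatives. -/
def PolyVanish {n : ι → ℕ} (f : MvPolynomial ((i : ι) × Fin (n i + 1)) ℂ)
    (x : PStack n) : Prop :=
  ∀ v : (i : ι) → Fin (n i + 1) → ℂ,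
    (∀ i, ∃ hv : v i ≠ 0, Projectivization.mk ℂ (v i) hv = x i) →
    MvPolynomial.eval (fun p => v p.1 p.2) f = 0

/-- Algebraic subsets of multiprojective space. -/
def IsAlgebraicSet {n : ι → ℕ} (X : Set (PStack n)) : Prop :=
  ∃ F : Set (MvPolynomial ((i : ι) × Fin (n i + 1)) ℂ),
    X = {x | ∀ f ∈ F, PolyVanish f x}

/-- Irreducible multiprojective varieties: nonempty algebraic sets that are not
contained in the union of two algebraic sets without being contained in one. -/
def IsIrredVariety {n : ι → ℕ} (X : Set (PStack n)) : Prop :=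
  IsAlgebraicSet X ∧ X.Nonempty ∧
    ∀ A B : Set (PStack n), IsAlgebraicSet A → IsAlgebraicSet B →
      X ⊆ A ∪ B → (X ⊆ A ∨ X ⊆ B)

/-- An irreducible component of a multiprojective variety. -/
def IsComponentOf {n : ι → ℕ} (Y X : Set (PStack n)) : Prop :=
  IsIrredVariety Y ∧ Y ⊆ X ∧
    ∀ Y' : Set (PStack n), IsIrredVariety Y' → Y ⊆ Y' → Y' ⊆ X → Y' = Y

/-- Parameter space for a multilinear slice of type `e`: `e i` linear forms in
the variables of the `i`-th factor. -/
abbrev SliceParams (n : ι → ℕ) (e : ι → ℕ) :=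
  (i : ι) → Fin (e i) → (Fin (n i + 1) → ℂ)

/-- The common zero set in multiprojective space of a multilinear slice. -/
def SliceZeros {n : ι → ℕ} {e : ι → ℕ} (L : SliceParams n e) : Set (PStack n) :=
  {x | ∀ (i : ι) (j : Fin (e i)), PLinVanish (L i j) (x i)}

/-- A property holds generically (on a dense open set) of a parameter. -/
def Generic {α : Type*} [TopologicalSpace α] (P : α → Prop) : Prop :=
  ∃ U : Set α, IsOpen U ∧ Dense U ∧ ∀ a ∈ U, P a

/-- The multidimension `Dim(X)`: the set of vectors `e` such that a general
multilinear slice of type `e` meets `X` in finitely many, and at least one, points. -/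
def MDim {n : ι → ℕ} (X : Set (PStack n)) : Set (ι → ℕ) :=
  {e | (∀ i, e i ≤ n i) ∧
    Generic (fun L : SliceParams n e =>
      (X ∩ SliceZeros L).Finite ∧ (X ∩ SliceZeros L).Nonempty)}

/-- `Deg_X(e) = d`: a general multilinear slice of type `e` meets `X` in exactly
`d` points. -/
def DegIs {n : ι → ℕ} (X : Set (PStack n)) (e : ι → ℕ) (d : ℕ) : Prop :=
  Generic (fun L : SliceParams n e =>
    (X ∩ SliceZeros L).Finite ∧ (X ∩ SliceZeros L).ncard = d)

/-- The intrinsic dimension of a multiprojective variety, read off as the common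
total degree of the vectors in its multidimension. -/
noncomputable def dimOf {n : ι → ℕ} (X : Set (PStack n)) : ℕ :=
  sSup {m | ∃ e ∈ MDim X, ∑ i, e i = m}

/-- Projection of the multiprojective space onto the factors indexed by `I`. -/
def resMap {n : ι → ℕ} (I : Finset ι) (x : PStack n) :
    PStack (fun i : {j // j ∈ I} => n i.1) :=
  fun i => x i.1

/-- `dim π_I(X)`: the dimension of the projection of `X` onto the factors
indexed by `I`. -/
noncomputable def dimProj {n : ι → ℕ} (I : Finset ι) (X : Set (PStack n)) : ℕ :=
  dimOf (resMap I '' X)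

/-- An equidimensional multiprojective variety: all irreducible components have
the same multidimension. -/
def Equidimensional {n : ι → ℕ} (X : Set (PStack n)) : Prop :=
  IsAlgebraicSet X ∧ X.Nonempty ∧
    ∀ Y Y' : Set (PStack n), IsComponentOf Y X → IsComponentOf Y' X →
      MDim Y = MDim Y'

/-- The set of lattice points of a polymatroid polytope inside the box `[n]`,
cut out by a submodular, monotone rank function. -/
def IsPolymatroidSet (n : ι → ℕ) (P : Set (ι → ℕ)) : Prop :=
  ∃ r : Finset ι → ℕ,
    (∀ A B : Finset ι, r (A ∪ B) + r (A ∩ B) ≤ r A + r B) ∧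
    (∀ A B : Finset ι, A ⊆ B → r A ≤ r B) ∧
    P = {e | (∀ i, e i ≤ n i) ∧ (∑ i, e i = r Finset.univ) ∧
          ∀ S : Finset ι, ∑ i ∈ S, e i ≤ r S}

section Product

variable {ι₁ ι₂ : Type*} [Fintype ι₁] [DecidableEq ι₁] [Fintype ι₂] [DecidableEq ι₂]

/-- Combine points of two multiprojective spaces into a point of the product
multiprojective space, indexed by the disjoint union of the index sets. -/
def combine {n₁ : ι₁ → ℕ} {n₂ : ι₂ → ℕ} (y : PStack n₁) (z : PStack n₂) :
    PStack (Sum.elim n₁ n₂) := fun i =>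
  match i with
  | Sum.inl a => y a
  | Sum.inr b => z b

/-- The Cartesian product of multiprojective varieties in disjoint factors. -/
def prodSet {n₁ : ι₁ → ℕ} {n₂ : ι₂ → ℕ} (Y : Set (PStack n₁)) (Z : Set (PStack n₂)) :
    Set (PStack (Sum.elim n₁ n₂)) :=
  {x | ∃ y ∈ Y, ∃ z ∈ Z, x = combine y z}

/-- Projection of the product multiprojective space onto the first group of factors. -/
def projL {n₁ : ι₁ → ℕ} {n₂ : ι₂ → ℕ} (x : PStack (Sum.elim n₁ n₂)) : PStack n₁ :=
  fun a => x (Sum.inl a)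

/-- Projection of the product multiprojective space onto the second group of factors. -/
def projR {n₁ : ι₁ → ℕ} {n₂ : ι₂ → ℕ} (x : PStack (Sum.elim n₁ n₂)) : PStack n₂ :=
  fun b => x (Sum.inr b)

end Product

section Segre

/-- Degree `δ` of a subset `S` of the projective space `ℙ(ℂ^κ)` of dimension `d`:
a general collection of `d` hyperplanes meets `S` in exactly `δ` points. -/
def ProjDegIs {κ : Type*} [Fintype κ] (S : Set (Projectivization ℂ (κ → ℂ)))
    (d : ℕ) (δ : ℕ) : Prop :=
  Generic (fun c : Fin d → κ → ℂ =>
    (S ∩ {p | ∀ j, PLinVanish (c j) p}).Finite ∧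
    (S ∩ {p | ∀ j, PLinVanish (c j) p}).ncard = δ)

/-- `σ` is a Segre embedding: on homogeneous representatives it is given by the
tensor (outer) product of the coordinate vectors of the factors. -/
def IsSegreMap (n : ι → ℕ)
    (σ : PStack n → Projectivization ℂ (((i : ι) → Fin (n i + 1)) → ℂ)) : Prop :=
  ∀ (x : PStack n) (v : (i : ι) → Fin (n i + 1) → ℂ),
    (∀ i, ∃ hv : v i ≠ 0, Projectivization.mk ℂ (v i) hv = x i) →
    ∃ h : (fun a : (i : ι) → Fin (n i + 1) => ∏ i, v i (a i)) ≠ 0,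
      Projectivization.mk ℂ (fun a : (i : ι) → Fin (n i + 1) => ∏ i, v i (a i)) h = σ x

end Segre

end MultiProj

open MultiProj

/-! ### The Hamiltonian derivation of a plane curve -/

namespace SegreCurve

open Polynomial Filter Topology

/-- Evaluation of a bivariate polynomial at a point of `ℂ²`. -/
noncomputable abbrev ev (p : ℂ × ℂ) : ℂ[X][X] →+* ℂ := evalEvalRingHom p.1 p.2

/-- The partial derivative of a bivariate polynomial with respect to the inner variable. -/
noncomputable def dT (G : ℂ[X][X]) : ℂ[X][X] :=
  Bivariate.swap (R := ℂ) (derivative (Bivariate.swap (R := ℂ) G))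

lemma dT_add (G H : ℂ[X][X]) : dT (G + H) = dT G + dT H := by simp [dT]

lemma dT_mul (G H : ℂ[X][X]) : dT (G * H) = dT G * H + G * dT H := by
  simp only [dT, map_mul, derivative_mul, map_add, Bivariate.swap_swap_apply]

lemma dT_CC (c : ℂ) : dT (C (C c)) = 0 := by
  simp only [dT, Bivariate.swap_C_C, derivative_C, map_zero]

lemma dT_CX : dT (C X) = 1 := by
  simp only [dT, Bivariate.swap_X, derivative_X, map_one]

lemma dT_X : dT X = 0 := by
  simp only [dT, Bivariate.swap_Y, derivative_C, map_zero]

/-- The Hamiltonian derivation `G ↦ P_u G_t - P_t G_u`, tangent to the plane curve `P = 0`. -/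
noncomputable def DP (P G : ℂ[X][X]) : ℂ[X][X] := derivative P * dT G - dT P * derivative G

lemma DP_add (P G H : ℂ[X][X]) : DP P (G + H) = DP P G + DP P H := by
  simp only [DP, dT_add, derivative_add]; ring

lemma DP_mul (P G H : ℂ[X][X]) : DP P (G * H) = DP P G * H + G * DP P H := by
  simp only [DP, dT_mul, derivative_mul]; ring

lemma DP_CC (P : ℂ[X][X]) (c : ℂ) : DP P (C (C c)) = 0 := by
  simp only [DP, dT_CC, derivative_C]; ring

lemma DP_CC_mul (P G : ℂ[X][X]) (c : ℂ) : DP P (C (C c) * G) = C (C c) * DP P G := by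
  simp only [DP_mul, DP_CC]; ring

lemma DP_sum {κ : Type*} (s : Finset κ) (P : ℂ[X][X]) (G : κ → ℂ[X][X]) :
    DP P (∑ a ∈ s, G a) = ∑ a ∈ s, DP P (G a) := by
  classical
  induction s using Finset.induction_on with
  | empty => simp [DP, dT]
  | insert a s ha ih => rw [Finset.sum_insert ha, Finset.sum_insert ha, DP_add, ih]

lemma ev_DP_of_dvd {P G : ℂ[X][X]} (h : P ∣ G) {p : ℂ × ℂ} (hp : ev p P = 0) :
    ev p (DP P G) = 0 := by
  obtain ⟨H, rfl⟩ := h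
  have : DP P P = 0 := by simp only [DP]; ring
  rw [DP_mul, this]
  simp only [map_add, map_mul, hp, map_zero, zero_mul, add_zero]

lemma hasStrictFDerivAt_ev (G : ℂ[X][X]) (p : ℂ × ℂ) :
    HasStrictFDerivAt (fun q : ℂ × ℂ => ev q G)
      (ev p (dT G) • ContinuousLinearMap.fst ℂ ℂ ℂ +
        ev p (derivative G) • ContinuousLinearMap.snd ℂ ℂ ℂ) p := by
  have hmul : ∀ G H : ℂ[X][X],
      HasStrictFDerivAt (fun q : ℂ × ℂ => ev q G)
        (ev p (dT G) • ContinuousLinearMap.fst ℂ ℂ ℂ +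
          ev p (derivative G) • ContinuousLinearMap.snd ℂ ℂ ℂ) p →
      HasStrictFDerivAt (fun q : ℂ × ℂ => ev q H)
        (ev p (dT H) • ContinuousLinearMap.fst ℂ ℂ ℂ +
          ev p (derivative H) • ContinuousLinearMap.snd ℂ ℂ ℂ) p →
      HasStrictFDerivAt (fun q : ℂ × ℂ => ev q (G * H))
        (ev p (dT (G * H)) • ContinuousLinearMap.fst ℂ ℂ ℂ +
          ev p (derivative (G * H)) • ContinuousLinearMap.snd ℂ ℂ ℂ) p := by
    intro G H hG hH
    refine ((hG.mul hH).congr_of_eventuallyEq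
      (Eventually.of_forall fun q => by simp)).congr_fderiv ?_
    ext <;> simp [dT_mul] <;> ring
  have hadd : ∀ G H : ℂ[X][X],
      HasStrictFDerivAt (fun q : ℂ × ℂ => ev q G)
        (ev p (dT G) • ContinuousLinearMap.fst ℂ ℂ ℂ +
          ev p (derivative G) • ContinuousLinearMap.snd ℂ ℂ ℂ) p →
      HasStrictFDerivAt (fun q : ℂ × ℂ => ev q H)
        (ev p (dT H) • ContinuousLinearMap.fst ℂ ℂ ℂ +
          ev p (derivative H) • ContinuousLinearMap.snd ℂ ℂ ℂ) p →
      HasStrictFDerivAt (fun q : ℂ × ℂ => ev q (G + H))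
        (ev p (dT (G + H)) • ContinuousLinearMap.fst ℂ ℂ ℂ +
          ev p (derivative (G + H)) • ContinuousLinearMap.snd ℂ ℂ ℂ) p := by
    intro G H hG hH
    refine ((hG.add hH).congr_of_eventuallyEq
      (Eventually.of_forall fun q => by simp)).congr_fderiv ?_
    ext <;> simp [dT_add]
  induction G using Polynomial.induction_on' with
  | add G H hG hH => exact hadd G H hG hH
  | monomial n a =>
    have hY : ∀ k : ℕ, HasStrictFDerivAt (fun q : ℂ × ℂ => ev q (X ^ k))
        (ev p (dT (X ^ k)) • ContinuousLinearMap.fst ℂ ℂ ℂ +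
          ev p (derivative (X ^ k)) • ContinuousLinearMap.snd ℂ ℂ ℂ) p := by
      intro k
      induction k with
      | zero =>
        simp only [pow_zero, map_one]
        refine (hasStrictFDerivAt_const (1 : ℂ) p).congr_fderiv ?_
        have := dT_CC 1
        simp only [map_one] at this
        ext <;> simp [this]
      | succ k ih =>
        rw [pow_succ]
        refine hmul _ _ ih ?_
        refine (hasStrictFDerivAt_snd (p := p)).congr_of_eventuallyEq ?_ |>.congr_fderiv ?_
        · exact Eventually.of_forall fun q => by simp
        · ext <;> simp [dT_X]
    have hC : HasStrictFDerivAt (fun q : ℂ × ℂ => ev q (C a))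
        (ev p (dT (C a)) • ContinuousLinearMap.fst ℂ ℂ ℂ +
          ev p (derivative (C a)) • ContinuousLinearMap.snd ℂ ℂ ℂ) p := by
      induction a using Polynomial.induction_on' with
      | add a b ha hb => rw [C_add]; exact hadd _ _ ha hb
      | monomial m c =>
        rw [← C_mul_X_pow_eq_monomial, C_mul]
        refine hmul _ _ ?_ ?_
        · refine (hasStrictFDerivAt_const (c : ℂ) p).congr_of_eventuallyEq ?_ |>.congr_fderiv ?_
          · exact Eventually.of_forall fun q => by simp
          · ext <;> simp [dT_CC]
        · rw [C_pow]
          induction m with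
          | zero =>
            have := hY 0
            simpa using! this
          | succ k ih =>
            rw [pow_succ]
            refine hmul _ _ ih ?_
            refine (hasStrictFDerivAt_fst (p := p)).congr_of_eventuallyEq ?_ |>.congr_fderiv ?_
            · exact Eventually.of_forall fun q => by simp
            · ext <;> simp [dT_CX]
    rw [← C_mul_X_pow_eq_monomial]
    exact hmul _ _ hC (hY n)

lemma continuous_ev (G : ℂ[X][X]) : Continuous (fun q : ℂ × ℂ => ev q G) :=
  continuous_iff_continuousAt.2 fun p => (hasStrictFDerivAt_ev G p).continuousAt

end SegreCurve

/-! ### Local analysis on a plane curve -/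

namespace SegreCurve

open Polynomial Filter Topology

lemma contDiff_ev (G : ℂ[X][X]) : ContDiff ℂ 1 (fun q : ℂ × ℂ => ev q G) := by
  induction G using Polynomial.induction_on' with
  | add G H hG hH => simpa only [map_add] using hG.add hH
  | monomial n a =>
    have h1 : ContDiff ℂ 1 (fun q : ℂ × ℂ => a.eval q.1) := by
      have : ContDiff ℂ 1 (fun x : ℂ => a.eval x) := by
        simpa only [coe_aeval_eq_eval] using Polynomial.contDiff_aeval (𝕜 := ℂ) a 1
      exact this.comp contDiff_fst
    have h2 := h1.mul ((contDiff_snd (𝕜 := ℂ) (E := ℂ) (F := ℂ) (n := 1)).pow n)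
    have h3 : (fun q : ℂ × ℂ => ev q (monomial n a)) = fun q => a.eval q.1 * q.2 ^ n := by
      funext q
      simp [← C_mul_X_pow_eq_monomial]
    rw [h3]
    exact h2

/-- Local parametrization of the plane curve `P = 0` by the first coordinate near a point where
`P_u ≠ 0`; along it, `P_u` times the derivative of a polynomial function is the Hamiltonian
derivation. -/
lemma exists_param (P : ℂ[X][X]) (p : ℂ × ℂ) (hp : ev p P = 0) (hu : ev p (derivative P) ≠ 0) :
    ∃ φ : ℂ → ℂ, φ p.1 = p.2 ∧ ContinuousAt φ p.1 ∧
      ∀ᶠ t in 𝓝 p.1, ev (t, φ t) P = 0 ∧ ContinuousAt φ t ∧ ∀ G : ℂ[X][X], ∃ D,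
        HasDerivAt (fun s => ev (s, φ s) G) D t ∧
        ev (t, φ t) (derivative P) * D = ev (t, φ t) (DP P G) := by
  have hcd : ContDiffAt ℂ 1 (fun q : ℂ × ℂ => ev q P) p := (contDiff_ev P).contDiffAt
  have hfd : fderiv ℂ (fun q : ℂ × ℂ => ev q P) p ∘L .inr ℂ ℂ ℂ =
      ((ContinuousLinearEquiv.unitsEquivAut ℂ (Units.mk0 _ hu) : ℂ ≃L[ℂ] ℂ) : ℂ →L[ℂ] ℂ) := by
    rw [(hasStrictFDerivAt_ev P p).hasFDerivAt.fderiv]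
    ext
    simp
  have hinv : (fderiv ℂ (fun q : ℂ × ℂ => ev q P) p ∘L .inr ℂ ℂ ℂ).IsInvertible := by
    rw [hfd]; exact ⟨_, rfl⟩
  have hφ := hcd.contDiffAt_implicitFunction one_ne_zero hinv
  have h0 := hcd.implicitFunction_apply_self one_ne_zero hinv
  have hP := hcd.eventually_apply_implicitFunction one_ne_zero hinv
  set φ := hcd.implicitFunction one_ne_zero hinv
  refine ⟨φ, h0, hφ.continuousAt, ?_⟩
  filter_upwards [hφ.eventually (by simp), hP, hP.eventually_nhds] with t ht1 ht2 ht3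
  have hder := (ht1.differentiableAt one_ne_zero).hasDerivAt
  refine ⟨ht2.trans hp, ht1.continuousAt, fun G => ?_⟩
  have key : ∀ G : ℂ[X][X], HasDerivAt (fun s => ev (s, φ s) G)
      (ev (t, φ t) (dT G) + ev (t, φ t) (derivative G) * deriv φ t) t := by
    intro G
    have := (hasStrictFDerivAt_ev G (t, φ t)).hasFDerivAt.comp_hasDerivAt t
      ((hasDerivAt_id t).prodMk hder)
    refine this.congr_deriv ?_
    simp
  refine ⟨_, key G, ?_⟩
  have h1 : HasDerivAt (fun s => ev (s, φ s) P) 0 t :=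
    (hasDerivAt_const t (0 : ℂ)).congr_of_eventuallyEq
      (ht3.mono fun s hs => hs.trans hp)
  have h2 := h1.unique (key P)
  simp only [DP, map_sub, map_mul]
  linear_combination (-ev (t, φ t) (derivative G)) * h2

lemma infinite_nhds (t : ℂ) {s : Set ℂ} (hs : s ∈ 𝓝 t) : s.Infinite :=
  infinite_of_mem_nhds t hs

/-- If the Wronskian of `T₀` and `T₁` vanishes along the curve, then `T₁ / T₀` is locally constant
on it, so the member `T₁ - c T₀` of the pencil through a point `p` with `T₀ p ≠ 0` has infinitely
many zeros on the curve. -/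
lemma wronskian {P g : ℂ[X][X]}
    (hsm : ∀ p, ev p P = 0 → ev p g ≠ 0 → ev p (derivative P) ≠ 0)
    {T₀ T₁ : ℂ[X][X]}
    (hW : P ∣ T₀ * DP P T₁ - T₁ * DP P T₀) {p : ℂ × ℂ} (hp : ev p P = 0) (hg : ev p g ≠ 0)
    (h0 : ev p T₀ ≠ 0) :
    {q | (ev q P = 0 ∧ ev q g ≠ 0) ∧
      ev q (T₁ - C (C (ev p T₁ / ev p T₀)) * T₀) = 0}.Infinite := by
  obtain ⟨φ, hφ0, hφc, hφ⟩ := exists_param P p hp (hsm p hp hg)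
  have hc : ∀ G : ℂ[X][X], ContinuousAt (fun s => ev (s, φ s) G) p.1 := fun G =>
    ((continuous_ev G).continuousAt).comp (continuousAt_id.prodMk hφc)
  have hpe : (p.1, φ p.1) = p := by rw [hφ0]
  have hev : ∀ᶠ t in 𝓝 p.1, ev (t, φ t) P = 0 ∧ ev (t, φ t) g ≠ 0 ∧ ev (t, φ t) T₀ ≠ 0 ∧
      HasDerivAt (fun s => ev (s, φ s) T₁ / ev (s, φ s) T₀) 0 t := by
    filter_upwards [hφ, (hc g).eventually_ne (by simpa only [hpe] using hg),
      (hc T₀).eventually_ne (by simpa only [hpe] using h0)] with t ht htg ht0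
    refine ⟨ht.1, htg, ht0, ?_⟩
    obtain ⟨D0, hD0, e0⟩ := ht.2.2 T₀
    obtain ⟨D1, hD1, e1⟩ := ht.2.2 T₁
    refine (hD1.div hD0 ht0).congr_deriv ?_
    have hPu := hsm _ ht.1 htg
    obtain ⟨H, hH⟩ := hW
    have h3 : ev (t, φ t) (T₀ * DP P T₁ - T₁ * DP P T₀) = 0 := by
      rw [hH, map_mul, ht.1, zero_mul]
    rw [map_sub, map_mul, map_mul, ← e0, ← e1] at h3
    rw [div_eq_zero_iff]; left
    apply mul_left_cancel₀ hPu
    linear_combination h3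
  obtain ⟨ε, hε, hball⟩ := Metric.eventually_nhds_iff_ball.1 hev
  have hconst : ∀ t ∈ Metric.ball p.1 ε, ev (t, φ t) T₁ / ev (t, φ t) T₀ = ev p T₁ / ev p T₀ := by
    intro t ht
    have := Metric.isOpen_ball.is_const_of_deriv_eq_zero (𝕜 := ℂ)
      (convex_ball p.1 ε).isPreconnected
      (f := fun s => ev (s, φ s) T₁ / ev (s, φ s) T₀)
      (fun s hs => (hball s hs).2.2.2.differentiableAt.differentiableWithinAt)
      (fun s hs => (hball s hs).2.2.2.deriv) ht (Metric.mem_ball_self hε)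
    simpa only [hpe] using this
  have hinf : (Metric.ball p.1 ε).Infinite := infinite_nhds p.1 (Metric.ball_mem_nhds _ hε)
  refine (hinf.image (f := fun t => (t, φ t)) fun a _ b _ h => (Prod.ext_iff.1 h).1).mono ?_
  rintro _ ⟨t, ht, rfl⟩
  refine ⟨⟨(hball t ht).1, (hball t ht).2.1⟩, ?_⟩
  have h1 := hconst t ht
  have h2 := (hball t ht).2.2.1
  rw [div_eq_iff h2] at h1
  rw [map_sub, h1, map_mul]
  simp

/-- Implicit function theorem for the intersection of the curve `P = 0` with a varying member
of a linear system, near a transversal intersection point. -/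
lemma exists_implicit {κ : Type*} [Fintype κ] (P : ℂ[X][X]) (Z : κ → ℂ[X][X]) (c : κ → ℂ)
    (p : ℂ × ℂ) (hP : ev p P = 0) (hT : ev p (∑ a, C (C (c a)) * Z a) = 0)
    (hJ : ev p (DP P (∑ a, C (C (c a)) * Z a)) ≠ 0) :
    ∃ ψ : (κ → ℂ) → ℂ × ℂ, Tendsto ψ (𝓝 c) (𝓝 p) ∧
      (∀ᶠ c' in 𝓝 c, ev (ψ c') P = 0 ∧ ev (ψ c') (∑ a, C (C (c' a)) * Z a) = 0) ∧
      (∀ᶠ x in 𝓝 (c, p), ev x.2 P = 0 → ev x.2 (∑ a, C (C (x.1 a)) * Z a) = 0 → ψ x.1 = x.2) := by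
  have hlin : ∀ (c : κ → ℂ) q, ev q (∑ a, C (C (c a)) * Z a) = ∑ a, c a * ev q (Z a) := by
    intro c q
    rw [map_sum]
    exact Finset.sum_congr rfl fun a _ => by rw [map_mul]; simp
  let F : (κ → ℂ) × (ℂ × ℂ) → ℂ × ℂ := fun x =>
    (ev x.2 P, ∑ a, x.1 a * ev x.2 (Z a))
  have hF : ContDiff ℂ 1 F := by
    refine ContDiff.prodMk ((contDiff_ev P).comp contDiff_snd) ?_
    refine ContDiff.sum fun a _ => ContDiff.mul ?_ ((contDiff_ev (Z a)).comp contDiff_snd)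
    exact (contDiff_apply ℂ ℂ a).comp contDiff_fst
  have hcd : ContDiffAt ℂ 1 F (c, p) := hF.contDiffAt
  have hfd : HasFDerivAt (fun q => F (c, q)) (fderiv ℂ F (c, p) ∘L .inr ℂ (κ → ℂ) (ℂ × ℂ)) p :=
    HasFDerivAt.comp p (hcd.differentiableAt one_ne_zero).hasFDerivAt
      (hasFDerivAt_prodMk_right c p)
  set T : ℂ[X][X] := ∑ a, C (C (c a)) * Z a with hTdef
  have hfd2 : HasFDerivAt (fun q => F (c, q))
      ((ev p (dT P) • ContinuousLinearMap.fst ℂ ℂ ℂ +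
        ev p (derivative P) • ContinuousLinearMap.snd ℂ ℂ ℂ).prod
       (ev p (dT T) • ContinuousLinearMap.fst ℂ ℂ ℂ +
        ev p (derivative T) • ContinuousLinearMap.snd ℂ ℂ ℂ)) p := by
    have h1 := ((hasStrictFDerivAt_ev P p).hasFDerivAt).prodMk
      ((hasStrictFDerivAt_ev T p).hasFDerivAt)
    refine h1.congr_of_eventuallyEq (Eventually.of_forall fun q => ?_)
    simp only [F, hlin, hTdef]
  have heq := hfd.unique hfd2
  have hinv : (fderiv ℂ F (c, p) ∘L .inr ℂ (κ → ℂ) (ℂ × ℂ)).IsInvertible := by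
    rw [heq]
    set A := (ev p (dT P) • ContinuousLinearMap.fst ℂ ℂ ℂ +
        ev p (derivative P) • ContinuousLinearMap.snd ℂ ℂ ℂ).prod
       (ev p (dT T) • ContinuousLinearMap.fst ℂ ℂ ℂ +
        ev p (derivative T) • ContinuousLinearMap.snd ℂ ℂ ℂ) with hA
    have hinj : Function.Injective A := by
      rw [injective_iff_map_eq_zero]
      rintro ⟨x, y⟩ hxy
      simp only [hA, ContinuousLinearMap.prod_apply, add_apply,
        smul_apply, ContinuousLinearMap.coe_fst', ContinuousLinearMap.coe_snd',
        smul_eq_mul, Prod.mk_eq_zero] at hxy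
      obtain ⟨e1, e2⟩ := hxy
      simp only [DP, map_sub, map_mul] at hJ
      have hx : x = 0 := by
        apply mul_left_cancel₀ hJ
        linear_combination (ev p (derivative P)) * e2 - ev p (derivative T) * e1
      have hy : y = 0 := by
        apply mul_left_cancel₀ hJ
        linear_combination (-ev p (dT P)) * e2 + ev p (dT T) * e1
      rw [hx, hy]; rfl
    let e := LinearEquiv.ofInjectiveEndo (A : ℂ × ℂ →ₗ[ℂ] ℂ × ℂ) hinj
    refine ⟨e.toContinuousLinearEquiv, ?_⟩
    ext <;> rfl
  have hF0 : F (c, p) = 0 := by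
    simp only [F, ← hlin, ← hTdef, hP, hT]; rfl
  have hφ := hcd.contDiffAt_implicitFunction one_ne_zero hinv
  have h0 := hcd.implicitFunction_apply_self one_ne_zero hinv
  have h1 := hcd.eventually_apply_implicitFunction one_ne_zero hinv
  have h2 := hcd.eventually_apply_eq_iff_implicitFunction one_ne_zero hinv
  set ψ := hcd.implicitFunction one_ne_zero hinv
  refine ⟨ψ, ?_, ?_, ?_⟩
  · have := hφ.continuousAt.tendsto
    rwa [h0] at this
  · filter_upwards [h1] with c' hc'
    rw [hF0] at hc'
    simp only [F, ← hlin] at hc'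
    exact Prod.mk_eq_zero.1 hc'
  · filter_upwards [h2] with x hx e1 e2
    rw [hF0] at hx
    refine hx.1 ?_
    simp only [F, ← hlin, e1, e2]; rfl

end SegreCurve

/-! ### Pencils on a plane curve -/

namespace SegreCurve

open Polynomial Filter Topology

/-- The locally closed plane curve `P = 0`, `g ≠ 0`. -/
def Gam (P g : ℂ[X][X]) : Set (ℂ × ℂ) := {p | ev p P = 0 ∧ ev p g ≠ 0}

/-- The part `g ≠ 0` of the plane curve `P = 0` is a graph over the first coordinate locally, and
a polynomial with infinitely many zeros on it is a multiple of `P`. -/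
structure IsPlaneModel (P g : ℂ[X][X]) : Prop where
  smooth : ∀ p ∈ Gam P g, ev p (derivative P) ≠ 0
  finite_or_dvd : ∀ G, {p ∈ Gam P g | ev p G = 0}.Finite ∨ P ∣ G

/-- In a pencil without a base point of multiplicity at least two, only finitely many members
are tangent to the curve. -/
lemma pencil {P g : ℂ[X][X]} (h : IsPlaneModel P g) (T₀ T₁ : ℂ[X][X])
    (hb : ∀ p ∈ Gam P g, ev p T₀ = 0 → ev p T₁ = 0 → ev p (DP P T₀) = 0 → ev p (DP P T₁) = 0 →
      False) :
    {s : ℂ | ∃ p ∈ Gam P g, ev p (T₀ + C (C s) * T₁) = 0 ∧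
      ev p (DP P (T₀ + C (C s) * T₁)) = 0}.Finite := by
  have hev : ∀ (s : ℂ) p, ev p (T₀ + C (C s) * T₁) = ev p T₀ + s * ev p T₁ := by
    intro s p; rw [map_add, map_mul]; simp
  have hevD : ∀ (s : ℂ) p, ev p (DP P (T₀ + C (C s) * T₁)) =
      ev p (DP P T₀) + s * ev p (DP P T₁) := by
    intro s p; rw [DP_add, DP_CC_mul, map_add, map_mul]; simp
  simp only [hev, hevD]
  -- each point of the curve is a point of tangency for at most one member
  have hone : ∀ p ∈ Gam P g, {s : ℂ | ev p T₀ + s * ev p T₁ = 0 ∧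
      ev p (DP P T₀) + s * ev p (DP P T₁) = 0}.Finite := by
    intro p hp
    apply Set.Subsingleton.finite
    rintro s ⟨h1, h2⟩ s' ⟨h1', h2'⟩
    by_contra hne
    have hne' : s - s' ≠ 0 := sub_ne_zero.2 hne
    have e1 : ev p T₁ = 0 := mul_left_cancel₀ hne' (by linear_combination h1 - h1')
    have e2 : ev p (DP P T₁) = 0 := mul_left_cancel₀ hne' (by linear_combination h2 - h2')
    rw [e1] at h1
    rw [e2] at h2
    exact hb p hp (by simpa using h1) e1 (by simpa using h2) e2
  have hfinpts : ∀ Z : Set (ℂ × ℂ), Z.Finite → Z ⊆ Gam P g →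
      {s : ℂ | ∃ p ∈ Z, ev p T₀ + s * ev p T₁ = 0 ∧
        ev p (DP P T₀) + s * ev p (DP P T₁) = 0}.Finite := by
    intro Z hZ hsub
    refine (hZ.biUnion fun p hp => hone p (hsub hp)).subset ?_
    rintro s ⟨p, hp, hs⟩
    exact Set.mem_biUnion hp hs
  -- every point of tangency is a zero of the Wronskian
  rcases h.finite_or_dvd (T₀ * DP P T₁ - T₁ * DP P T₀) with hfin | hdvd
  · refine (hfinpts _ hfin fun p hp => hp.1).subset ?_
    rintro s ⟨p, hp, h1, h2⟩
    refine ⟨p, ⟨hp, ?_⟩, h1, h2⟩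
    rw [map_sub, map_mul, map_mul]
    linear_combination ev p (DP P T₁) * h1 - ev p T₁ * h2
  by_cases hT : ∃ p ∈ Gam P g, ev p T₀ ≠ 0
  · obtain ⟨p, hp, hpT⟩ := hT
    have hinf := wronskian (fun p h1 h2 => h.smooth p ⟨h1, h2⟩) hdvd hp.1 hp.2 hpT
    set l := ev p T₁ / ev p T₀
    rcases h.finite_or_dvd (T₁ - C (C l) * T₀) with hf | hd
    · exact absurd hf hinf
    refine Set.Finite.subset (s := {s : ℂ | 1 + s * l = 0}) ?_ ?_
    · apply Set.Subsingleton.finite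
      intro s hs s' hs'
      simp only [Set.mem_ofPred_eq] at hs hs'
      have hl : l ≠ 0 := by rintro hl; rw [hl] at hs; simp at hs
      exact mul_right_cancel₀ hl (by linear_combination hs - hs')
    · rintro s ⟨q, hq, h1, h2⟩
      have e1 : ev q T₁ = l * ev q T₀ := by
        obtain ⟨H, hH⟩ := hd
        have := congrArg (ev q) hH
        rw [map_mul, hq.1, zero_mul, map_sub, map_mul, sub_eq_zero] at this
        simpa using this
      have e2 : ev q (DP P T₁) = l * ev q (DP P T₀) := by
        have h3 := ev_DP_of_dvd hd hq.1
        have h4 : T₁ - C (C l) * T₀ = T₁ + C (C (-l)) * T₀ := by simp only [C_neg]; ring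
        rw [h4, DP_add, DP_CC_mul, map_add, map_mul] at h3
        have h5 : ev q (C (C (-l))) = -l := by simp
        rw [h5] at h3
        linear_combination h3
      by_contra hne
      simp only [Set.mem_ofPred_eq] at hne
      have e3 : ev q T₀ = 0 := mul_left_cancel₀ hne (by rw [e1] at h1; linear_combination h1)
      have e4 : ev q (DP P T₀) = 0 := mul_left_cancel₀ hne (by rw [e2] at h2; linear_combination h2)
      exact hb q hq e3 (by rw [e1, e3, mul_zero]) e4 (by rw [e2, e4, mul_zero])
  · push Not at hT
    rcases h.finite_or_dvd T₀ with hf | hd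
    · refine (hfinpts _ hf fun p hp => hp.1).subset ?_
      rintro s ⟨p, hp, hs⟩
      exact ⟨p, ⟨hp, hT p hp⟩, hs⟩
    · refine (Set.finite_singleton (0 : ℂ)).subset ?_
      rintro s ⟨p, hp, h1, h2⟩
      have e2 := ev_DP_of_dvd hd hp.1
      rw [hT p hp, zero_add] at h1
      rw [e2, zero_add] at h2
      by_contra hs
      exact hb p hp (hT p hp) ((mul_eq_zero.1 h1).resolve_left hs) e2
        ((mul_eq_zero.1 h2).resolve_left hs)

end SegreCurve

/-! ### Homogeneous coordinates -/

namespace SegreCurve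

open Polynomial Filter Topology

variable {n : Bool → ℕ}

/-- The space of pairs of coordinate vectors. -/
abbrev Vec (n : Bool → ℕ) := (i : Bool) → Fin (n i + 1) → ℂ

/-- `v` is a system of homogeneous coordinates of the point `y`. -/
def Rep (v : Vec n) (y : PStack n) : Prop :=
  ∀ i, ∃ hv : v i ≠ 0, Projectivization.mk ℂ (v i) hv = y i

lemma Rep.ne {v : Vec n} {y : PStack n} (h : Rep v y) (i : Bool) : v i ≠ 0 := (h i).1

lemma exists_rep_of_ne {v : Vec n} (h : ∀ i, v i ≠ 0) : ∃ y, Rep v y :=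
  ⟨fun i => Projectivization.mk ℂ (v i) (h i), fun i => ⟨h i, rfl⟩⟩

lemma Rep.unique {v : Vec n} {y y' : PStack n} (h : Rep v y) (h' : Rep v y') : y = y' := by
  funext i
  rw [← (h i).2, ← (h' i).2]

lemma Rep.smul {v : Vec n} {y : PStack n} (h : Rep v y) {l : Bool → ℂ} (hl : ∀ i, l i ≠ 0) :
    Rep (fun i => l i • v i) y := by
  intro i
  refine ⟨smul_ne_zero (hl i) (h.ne i), ?_⟩
  rw [← (h i).2, Projectivization.mk_eq_mk_iff']
  exact ⟨l i, rfl⟩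

lemma Rep.exists_smul {v w : Vec n} {y : PStack n} (h : Rep v y) (h' : Rep w y) :
    ∃ l : Bool → ℂ, (∀ i, l i ≠ 0) ∧ w = fun i => l i • v i := by
  have : ∀ i, ∃ l : ℂ, l ≠ 0 ∧ w i = l • v i := by
    intro i
    have e := (h' i).2.trans (h i).2.symm
    rw [Projectivization.mk_eq_mk_iff'] at e
    obtain ⟨l, hl⟩ := e
    refine ⟨l, ?_, hl.symm⟩
    rintro rfl
    exact h'.ne i (by rw [← hl, zero_smul])
  choose l hl using this
  exact ⟨l, fun i => (hl i).1, funext fun i => (hl i).2⟩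

lemma exists_rep (y : PStack n) : ∃ v, Rep v y :=
  ⟨fun i => (y i).rep, fun i => ⟨(y i).rep_nonzero, (y i).mk_rep⟩⟩

lemma exists_rep_norm (y : PStack n) : ∃ v, Rep v y ∧ ∀ i, ‖v i‖ = 1 := by
  obtain ⟨v, hv⟩ := exists_rep y
  refine ⟨_, hv.smul (l := fun i => ((‖v i‖ : ℝ) : ℂ)⁻¹) fun i => ?_, fun i => ?_⟩
  · simpa using hv.ne i
  · have := norm_ne_zero_iff.2 (hv.ne i)
    rw [norm_smul, norm_inv, Complex.norm_real, norm_norm, inv_mul_cancel₀ this]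

/-- The cross products of two systems of coordinates vanish exactly when they represent the same
point. -/
lemma rep_iff_cross {v w : Vec n} {y : PStack n} (hv : ∀ i, v i ≠ 0) (hw : Rep w y) :
    Rep v y ↔ ∀ i a b, v i a * w i b = v i b * w i a := by
  constructor
  · intro h
    obtain ⟨l, -, rfl⟩ := h.exists_smul hw
    intro i a b
    simp only [Pi.smul_apply, smul_eq_mul]; ring
  · intro h i
    refine ⟨hv i, ?_⟩
    rw [← (hw i).2, Projectivization.mk_eq_mk_iff']
    obtain ⟨b, hb⟩ := Function.ne_iff.1 (hw.ne i)
    refine ⟨v i b / w i b, ?_⟩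
    funext a
    simp only [Pi.smul_apply, smul_eq_mul]
    rw [div_mul_eq_mul_div, div_eq_iff hb]
    exact (h i a b).symm

lemma plin_iff {v : Vec n} {y : PStack n} (h : Rep v y) (i : Bool) (c : Fin (n i + 1) → ℂ) :
    PLinVanish c (y i) ↔ ∑ a, c a * v i a = 0 := by
  constructor
  · intro H
    exact H (v i) (h.ne i) (h i).2
  · intro H w hw hwy
    have e := hwy.trans (h i).2.symm
    rw [Projectivization.mk_eq_mk_iff'] at e
    obtain ⟨l, hl⟩ := e
    rw [← hl]
    simp only [Pi.smul_apply, smul_eq_mul]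
    have : ∑ a, c a * (l * v i a) = l * ∑ a, c a * v i a := by
      rw [Finset.mul_sum]; exact Finset.sum_congr rfl fun a _ => by ring
    rw [this, H, mul_zero]

/-- Index set of the coordinates of the Segre embedding. -/
abbrev SIdx (n : Bool → ℕ) := (i : Bool) → Fin (n i + 1)

/-- The bilinear form with coefficient tensor `c`, evaluated at a pair of vectors. -/
def pair (c : SIdx n → ℂ) (v : Vec n) : ℂ := ∑ a, c a * ∏ i, v i (a i)

lemma pair_smul (c : SIdx n → ℂ) (v : Vec n) (l : Bool → ℂ) :
    pair c (fun i => l i • v i) = (∏ i, l i) * pair c v := by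
  simp only [pair, Pi.smul_apply, smul_eq_mul, Finset.prod_mul_distrib, Finset.mul_sum]
  exact Finset.sum_congr rfl fun a _ => by ring

lemma pair_eq_zero_iff (c : SIdx n → ℂ) {v w : Vec n} {y : PStack n} (hv : Rep v y)
    (hw : Rep w y) : pair c v = 0 ↔ pair c w = 0 := by
  obtain ⟨l, hl, rfl⟩ := hv.exists_smul hw
  rw [pair_smul, mul_eq_zero]
  simp [hl]

lemma pair_add_smul (c c' : SIdx n → ℂ) (s : ℂ) (v : Vec n) :
    pair (c + s • c') v = pair c v + s * pair c' v := by
  simp only [pair, Pi.add_apply, Pi.smul_apply, smul_eq_mul, Finset.mul_sum,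
    ← Finset.sum_add_distrib]
  exact Finset.sum_congr rfl fun a _ => by ring

lemma continuous_pair : Continuous fun x : (SIdx n → ℂ) × Vec n => pair x.1 x.2 := by
  unfold pair; fun_prop

lemma segre_plin_iff {σ : PStack n → Projectivization ℂ (((i : Bool) → Fin (n i + 1)) → ℂ)}
    (hσ : IsSegreMap n σ) {v : Vec n} {y : PStack n} (h : Rep v y) (c : SIdx n → ℂ) :
    PLinVanish c (σ y) ↔ pair c v = 0 := by
  obtain ⟨h0, he⟩ := hσ y v h
  constructor
  · intro H; exact H _ h0 he
  · intro H w hw hwy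
    have e := hwy.trans he.symm
    rw [Projectivization.mk_eq_mk_iff'] at e
    obtain ⟨l, hl⟩ := e
    rw [← hl]
    simp only [Pi.smul_apply, smul_eq_mul]
    have : ∑ a : SIdx n, c a * (l * ∏ i, v i (a i)) = l * pair c v := by
      rw [pair, Finset.mul_sum]; exact Finset.sum_congr rfl fun a _ => by ring
    rw [this, H, mul_zero]

/-- Decomposable coefficient tensors. -/
def tens (a : Vec n) : SIdx n → ℂ := fun k => ∏ i, a i (k i)

lemma pair_tens (a v : Vec n) : pair (tens a) v = ∏ i, ∑ k, a i k * v i k := by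
  rw [Finset.prod_univ_sum]
  simp only [pair, tens, Finset.prod_mul_distrib, Fintype.piFinset_univ]

lemma segre_injective {σ : PStack n → Projectivization ℂ (((i : Bool) → Fin (n i + 1)) → ℂ)}
    (hσ : IsSegreMap n σ) : Function.Injective σ := by
  intro y y' hyy
  obtain ⟨v, hv⟩ := exists_rep y
  obtain ⟨w, hw⟩ := exists_rep y'
  obtain ⟨h0, he⟩ := hσ y v hv
  obtain ⟨h0', he'⟩ := hσ y' w hw
  have e := (he.trans hyy).trans he'.symm
  rw [Projectivization.mk_eq_mk_iff'] at e
  obtain ⟨l, hl⟩ := e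
  have hl' : ∀ a b, l * (w true b * w false a) = v true b * v false a := by
    intro a b
    have := congrFun hl (fun i => match i with | false => a | true => b)
    simpa using this
  refine Rep.unique (v := v) hv ?_
  rw [rep_iff_cross hv.ne hw]
  obtain ⟨b₀, hb₀⟩ := Function.ne_iff.1 (hv.ne true)
  obtain ⟨a₀, ha₀⟩ := Function.ne_iff.1 (hv.ne false)
  have hb₀ : v true b₀ ≠ 0 := hb₀
  have ha₀ : v false a₀ ≠ 0 := ha₀
  rintro (_ | _) a b
  · apply mul_left_cancel₀ hb₀
    linear_combination (-w false b) * hl' a b₀ + w false a * hl' b b₀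
  · apply mul_left_cancel₀ ha₀
    linear_combination w true a * hl' a₀ b + hl' a₀ a * (-w true b)

/-- The cone over a subset of the biprojective space. -/
def cone (Y : Set (PStack n)) : Set (Vec n) := {v | ∃ y ∈ Y, Rep v y}

lemma mem_iff_of_rep {Y : Set (PStack n)} {v : Vec n} {y : PStack n} (h : Rep v y) :
    v ∈ cone Y ↔ y ∈ Y :=
  ⟨fun ⟨y', hy', h'⟩ => by rwa [h.unique h'], fun hy => ⟨y, hy, h⟩⟩

/-- The cone over an algebraic set is cut out by polynomials, together with the nonvanishing of
both vectors. -/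
lemma cone_eq {Y : Set (PStack n)} (hY : IsAlgebraicSet Y) :
    ∃ F : Set (MvPolynomial ((i : Bool) × Fin (n i + 1)) ℂ),
      cone Y = {v | (∀ i, v i ≠ 0) ∧ ∀ f ∈ F, ∀ l : Bool → ℂ, (∀ i, l i ≠ 0) →
        MvPolynomial.eval (fun p => l p.1 * v p.1 p.2) f = 0} := by
  obtain ⟨F, rfl⟩ := hY
  refine ⟨F, Set.ext fun v => ⟨?_, ?_⟩⟩
  · rintro ⟨y, hy, hv⟩
    refine ⟨hv.ne, fun f hf l hl => ?_⟩
    have := hy f hf (fun i => l i • v i) (hv.smul hl)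
    simpa only [Pi.smul_apply, smul_eq_mul] using this
  · rintro ⟨h0, h⟩
    obtain ⟨y, hy⟩ := exists_rep_of_ne h0
    refine ⟨y, fun f hf w hw => ?_, hy⟩
    obtain ⟨l, hl, rfl⟩ := hy.exists_smul hw
    simpa only [Pi.smul_apply, smul_eq_mul] using h f hf l hl

/-- Normalized representatives of points of `Y`. -/
def sphereCone (Y : Set (PStack n)) : Set (Vec n) := {v ∈ cone Y | ∀ i, ‖v i‖ = 1}

lemma isCompact_sphereCone {Y : Set (PStack n)} (hY : IsAlgebraicSet Y) :
    IsCompact (sphereCone Y) := by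
  obtain ⟨F, hF⟩ := cone_eq hY
  have : sphereCone Y = {v : Vec n | (∀ i, ‖v i‖ = 1) ∧ ∀ f ∈ F, ∀ l : Bool → ℂ, (∀ i, l i ≠ 0) →
        MvPolynomial.eval (fun p => l p.1 * v p.1 p.2) f = 0} := by
    ext v
    rw [sphereCone, hF]
    constructor
    · rintro ⟨⟨-, h⟩, h'⟩; exact ⟨h', h⟩
    · rintro ⟨h', h⟩
      exact ⟨⟨fun i h0 => by have := h' i; rw [h0, norm_zero] at this; simp at this, h⟩, h'⟩
  rw [this]
  refine Metric.isCompact_of_isClosed_isBounded ?_ ?_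
  · refine IsClosed.and ?_ ?_
    · simp only [Set.ofPred_forall]
      exact isClosed_iInter fun i =>
        isClosed_eq (continuous_apply i).norm continuous_const
    · simp only [Set.ofPred_forall]
      refine isClosed_iInter fun f => isClosed_iInter fun _ => isClosed_iInter fun l =>
        isClosed_iInter fun _ => isClosed_eq ?_ continuous_const
      refine (MvPolynomial.continuous_eval f).comp ?_
      fun_prop
  · refine (Metric.isBounded_closedBall (x := (0 : Vec n)) (r := 1)).subset ?_
    rintro v ⟨h, -⟩
    rw [mem_closedBall_zero_iff, pi_norm_le_iff_of_nonneg zero_le_one]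
    exact fun i => (h i).le

end SegreCurve

/-! ### Transversal bilinear forms -/

namespace SegreCurve

open Polynomial Filter Topology

variable {n : Bool → ℕ}

/-- The pair of vectors obtained by evaluating a pair of vectors of polynomials at `p`. -/
noncomputable def evX (X : (i : Bool) × Fin (n i + 1) → ℂ[X][X]) (p : ℂ × ℂ) : Vec n :=
  fun i a => ev p (X ⟨i, a⟩)

/-- A plane model of a curve `Y` in biprojective space: a parametrization, by polynomials, of all
but finitely many points of `Y` by a smooth affine plane curve, with a locally continuous
inverse. -/
structure IsModel (Y : Set (PStack n)) (P g : ℂ[X][X])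
    (X : (i : Bool) × Fin (n i + 1) → ℂ[X][X]) : Prop extends IsPlaneModel P g where
  maps : ∀ p ∈ Gam P g, ∃ y ∈ Y, Rep (evX X p) y
  bad_finite : {y ∈ Y | ¬ ∃ p ∈ Gam P g, Rep (evX X p) y}.Finite
  inv : ∃ ρ : Vec n → ℂ × ℂ, ∀ p ∈ Gam P g, ∀ v y, Rep (evX X p) y → Rep v y →
    ρ v = p ∧ ContinuousAt ρ v
  chart : ∃ j : (i : Bool) → Fin (n i + 1), ∀ p ∈ Gam P g, ∀ i, ev p (X ⟨i, j i⟩) ≠ 0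

/-- The pullback of the bilinear form with coefficients `c` to the plane model. -/
noncomputable def TT (X : (i : Bool) × Fin (n i + 1) → ℂ[X][X]) (c : SIdx n → ℂ) : ℂ[X][X] :=
  ∑ a, C (C (c a)) * ∏ i, X ⟨i, a i⟩

lemma ev_TT (X : (i : Bool) × Fin (n i + 1) → ℂ[X][X]) (c : SIdx n → ℂ) (p : ℂ × ℂ) :
    ev p (TT X c) = pair c (evX X p) := by
  simp only [TT, pair, evX, map_sum, map_mul, map_prod]
  exact Finset.sum_congr rfl fun a _ => by simp

lemma ev_DP_TT (P : ℂ[X][X]) (X : (i : Bool) × Fin (n i + 1) → ℂ[X][X]) (c : SIdx n → ℂ)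
    (p : ℂ × ℂ) :
    ev p (DP P (TT X c)) = ∑ a, c a * ev p (DP P (∏ i, X ⟨i, a i⟩)) := by
  simp only [TT, DP_sum, DP_CC_mul, map_sum, map_mul]
  exact Finset.sum_congr rfl fun a _ => by simp

lemma TT_add_smul (X : (i : Bool) × Fin (n i + 1) → ℂ[X][X]) (c c' : SIdx n → ℂ) (s : ℂ) :
    TT X (c + s • c') = TT X c + C (C s) * TT X c' := by
  simp only [TT, Pi.add_apply, Pi.smul_apply, smul_eq_mul, Finset.mul_sum,
    ← Finset.sum_add_distrib, C_add, C_mul]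
  exact Finset.sum_congr rfl fun a _ => by ring

/-- The points of `Y` on the divisor of the bilinear form with coefficients `c`. -/
def hyp (Y : Set (PStack n)) (c : SIdx n → ℂ) : Set (PStack n) :=
  {y ∈ Y | ∀ v, Rep v y → pair c v = 0}

lemma mem_hyp {Y : Set (PStack n)} {c : SIdx n → ℂ} {v : Vec n} {y : PStack n} (h : Rep v y) :
    y ∈ hyp Y c ↔ y ∈ Y ∧ pair c v = 0 :=
  ⟨fun H => ⟨H.1, H.2 v h⟩, fun H => ⟨H.1, fun _ hw => (pair_eq_zero_iff c h hw).1 H.2⟩⟩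

/-- Bilinear forms whose divisor meets `Y` transversally and only in points that the plane model
covers. -/
def good (Y : Set (PStack n)) (P g : ℂ[X][X]) (X : (i : Bool) × Fin (n i + 1) → ℂ[X][X]) :
    Set (SIdx n → ℂ) :=
  {c | ∀ y ∈ hyp Y c, ∃ p ∈ Gam P g, Rep (evX X p) y ∧ ev p (DP P (TT X c)) ≠ 0}

variable {Y : Set (PStack n)} {P g : ℂ[X][X]} {X : (i : Bool) × Fin (n i + 1) → ℂ[X][X]}

lemma IsModel.inj (M : IsModel Y P g X) {p q : ℂ × ℂ} (hp : p ∈ Gam P g) (hq : q ∈ Gam P g)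
    {y : PStack n} (h : Rep (evX X p) y) (h' : Rep (evX X q) y) : p = q := by
  obtain ⟨ρ, hρ⟩ := M.inv
  exact ((hρ p hp _ y h h).1).symm.trans (hρ q hq _ y h' h).1

lemma finite_of_dvd_imp (M : IsModel Y P g X) (G : ℂ[X][X])
    (hG : ∃ p ∈ Gam P g, ev p G ≠ 0) : {p ∈ Gam P g | ev p G = 0}.Finite := by
  rcases M.finite_or_dvd G with h | h
  · exact h
  · obtain ⟨p, hp, hne⟩ := hG
    obtain ⟨H, rfl⟩ := h
    exact absurd (by rw [map_mul, hp.1, zero_mul]) hne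

lemma hyp_finite (M : IsModel Y P g X) {c : SIdx n → ℂ} (hc : c ∈ good Y P g X) :
    (hyp Y c).Finite := by
  have hfin : {p ∈ Gam P g | ev p (TT X c) = 0 ∧ ev p (DP P (TT X c)) ≠ 0}.Finite := by
    rcases M.finite_or_dvd (TT X c) with h | h
    · exact h.subset fun p hp => ⟨hp.1, hp.2.1⟩
    · refine Set.finite_empty.subset ?_
      rintro p ⟨hp, -, h2⟩
      exact h2 (ev_DP_of_dvd h hp.1)
  refine (hfin.biUnion (t := fun p => {y | Rep (evX X p) y}) fun p _ =>
    Set.Subsingleton.finite fun y hy y' hy' => hy.unique hy').subset ?_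
  intro y hy
  obtain ⟨p, hp, hr, hJ⟩ := hc y hy
  refine Set.mem_biUnion (x := p) ⟨hp, ?_, hJ⟩ hr
  rw [ev_TT]
  exact hy.2 _ hr

/-- Transversal divisors form an open set, on which the number of intersection points with `Y` is
locally constant. -/
lemma good_locally_constant (hY : IsAlgebraicSet Y) (M : IsModel Y P g X) {c₀ : SIdx n → ℂ}
    (hc₀ : c₀ ∈ good Y P g X) :
    ∀ᶠ c in 𝓝 c₀, c ∈ good Y P g X ∧ (hyp Y c).ncard = (hyp Y c₀).ncard := by
  have hfin := hyp_finite M hc₀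
  obtain ⟨ρ, hρ⟩ := M.inv
  choose! p hpG hpR hpJ using hc₀
  have hpT : ∀ y ∈ hyp Y c₀, ev (p y) (TT X c₀) = 0 := fun y hy => by
    rw [ev_TT]; exact hy.2 _ (hpR y hy)
  have himp := fun y (hy : y ∈ hyp Y c₀) =>
    exists_implicit P (fun a : SIdx n => ∏ i, X ⟨i, a i⟩) c₀ (p y) (hpG y hy).1 (hpT y hy)
      (hpJ y hy)
  choose! ψ hψt hψ0 hψu using himp
  -- openness of the conditions defining a transversal intersection point
  have hopen : ∀ y ∈ hyp Y c₀, ∀ᶠ x : (SIdx n → ℂ) × (ℂ × ℂ) in 𝓝 (c₀, p y),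
      ev x.2 g ≠ 0 ∧ ev x.2 (DP P (TT X x.1)) ≠ 0 := by
    intro y hy
    have h1 : Continuous fun x : (SIdx n → ℂ) × (ℂ × ℂ) => ev x.2 g :=
      (continuous_ev g).comp continuous_snd
    have h2 : Continuous fun x : (SIdx n → ℂ) × (ℂ × ℂ) => ev x.2 (DP P (TT X x.1)) := by
      simp only [ev_DP_TT]
      refine continuous_finsetSum _ fun a _ => Continuous.mul ?_
        ((continuous_ev _).comp continuous_snd)
      exact (continuous_apply a).comp continuous_fst
    exact (h1.continuousAt.eventually_ne (hpG y hy).2).and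
      (h2.continuousAt.eventually_ne (hpJ y hy))
  -- the intersection points continue to transversal intersection points
  have hA : ∀ᶠ c in 𝓝 c₀, ∀ y ∈ hyp Y c₀, ψ y c ∈ Gam P g ∧ ev (ψ y c) (TT X c) = 0 ∧
      ev (ψ y c) (DP P (TT X c)) ≠ 0 := by
    rw [eventually_all_finite hfin]
    intro y hy
    have ht : Tendsto (fun c => (c, ψ y c)) (𝓝 c₀) (𝓝 (c₀, p y)) :=
      tendsto_id.prodMk_nhds (hψt y hy)
    filter_upwards [hψ0 y hy, ht.eventually (hopen y hy)] with c h1 h2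
    exact ⟨⟨h1.1, h2.1⟩, h1.2, h2.2⟩
  -- distinct intersection points remain distinct
  have hinj : ∀ᶠ c in 𝓝 c₀, ∀ y ∈ hyp Y c₀, ∀ y' ∈ hyp Y c₀, ψ y c = ψ y' c → y = y' := by
    rw [eventually_all_finite hfin]
    intro y hy
    rw [eventually_all_finite hfin]
    intro y' hy'
    by_cases hyy : y = y'
    · exact Eventually.of_forall fun _ _ => hyy
    · have hne : p y ≠ p y' := fun h => hyy ((hpR y hy).unique (h ▸ hpR y' hy'))
      have := ((hψt y hy).prodMk_nhds (hψt y' hy')).eventually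
        ((isOpen_ne_fun continuous_fst continuous_snd).mem_nhds (x := (p y, p y')) hne)
      exact this.mono fun c hc h => absurd h hc
  -- by compactness, every intersection point is a continuation of an old one
  have hsurj : ∀ᶠ c in 𝓝 c₀, ∀ v ∈ sphereCone Y, v ∈ sphereCone Y → pair c v = 0 →
      ∃ y ∈ hyp Y c₀, ∃ y', Rep v y' ∧ Rep (evX X (ψ y c)) y' := by
    -- the membership hypothesis is kept inside, since nearby points need not lie on the cone
    refine (isCompact_sphereCone hY).eventually_forall_of_forall_eventually ?_
    intro v₀ hv₀
    by_cases h0 : pair c₀ v₀ = 0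
    · obtain ⟨⟨y₀, hy₀, hr₀⟩, -⟩ := hv₀
      have hyh : y₀ ∈ hyp Y c₀ := (mem_hyp hr₀).2 ⟨hy₀, h0⟩
      have hbad : ∀ᶠ v in 𝓝 v₀, ∀ y ∈ {y ∈ Y | ¬ ∃ p ∈ Gam P g, Rep (evX X p) y}, ¬ Rep v y := by
        rw [eventually_all_finite M.bad_finite]
        intro y hy
        obtain ⟨w, hw⟩ := exists_rep y
        have hnot : ¬ ∀ i a b, v₀ i a * w i b = v₀ i b * w i a := by
          rw [← rep_iff_cross hr₀.ne hw]
          intro h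
          refine hy.2 ⟨p y₀, hpG y₀ hyh, ?_⟩
          rw [h.unique hr₀]
          exact hpR y₀ hyh
        push Not at hnot
        obtain ⟨i, a, b, hne⟩ := hnot
        have hop : ∀ᶠ v : Vec n in 𝓝 v₀, v i a * w i b ≠ v i b * w i a := by
          refine (isOpen_ne_fun ?_ ?_).mem_nhds hne <;> fun_prop
        exact hop.mono fun v hv h => hv ((rep_iff_cross h.ne hw).1 h i a b)
      obtain ⟨hρ0, hρc⟩ := hρ (p y₀) (hpG y₀ hyh) v₀ y₀ (hpR y₀ hyh) hr₀
      have htend : Tendsto (fun x : (SIdx n → ℂ) × Vec n => (x.1, ρ x.2)) (𝓝 (c₀, v₀))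
          (𝓝 (c₀, p y₀)) := by
        rw [nhds_prod_eq]
        refine Tendsto.prodMk_nhds tendsto_fst ?_
        have := hρc.tendsto
        rw [hρ0] at this
        exact this.comp tendsto_snd
      have hb' : ∀ᶠ x : (SIdx n → ℂ) × Vec n in 𝓝 (c₀, v₀),
          ∀ y ∈ {y ∈ Y | ¬ ∃ p ∈ Gam P g, Rep (evX X p) y}, ¬ Rep x.2 y := by
        rw [nhds_prod_eq]
        exact tendsto_snd.eventually hbad
      filter_upwards [hb', htend.eventually (hψu y₀ hyh)] with x hx1 hx2 hxS hx0
      obtain ⟨⟨y, hy, hr⟩, -⟩ := hxS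
      have hex : ∃ q ∈ Gam P g, Rep (evX X q) y := by
        by_contra hne
        exact hx1 y ⟨hy, hne⟩ hr
      obtain ⟨q, hq, hqr⟩ := hex
      have hρq := (hρ q hq x.2 y hqr hr).1
      rw [hρq] at hx2
      have hT : ev q (TT X x.1) = 0 := by
        rw [ev_TT]; exact (pair_eq_zero_iff _ hqr hr).2 hx0
      refine ⟨y₀, hyh, y, hr, ?_⟩
      rw [hx2 hq.1 hT]
      exact hqr
    · have : ∀ᶠ x : (SIdx n → ℂ) × Vec n in 𝓝 (c₀, v₀), pair x.1 x.2 ≠ 0 :=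
        continuous_pair.continuousAt.eventually_ne h0
      exact this.mono fun x hx _ h => absurd h hx
  filter_upwards [hA, hinj, hsurj] with c hcA hcI hcS
  have hcS' : ∀ z ∈ hyp Y c, ∃ y ∈ hyp Y c₀, Rep (evX X (ψ y c)) z := by
    intro z hz
    obtain ⟨v, hv, hv1⟩ := exists_rep_norm z
    obtain ⟨y, hy, z', hz', hz''⟩ := hcS v ⟨⟨z, hz.1, hv⟩, hv1⟩ ⟨⟨z, hz.1, hv⟩, hv1⟩ (hz.2 v hv)
    exact ⟨y, hy, by rw [hv.unique hz']; exact hz''⟩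
  refine ⟨fun z hz => ?_, ?_⟩
  · obtain ⟨y, hy, hyz⟩ := hcS' z hz
    exact ⟨_, (hcA y hy).1, hyz, (hcA y hy).2.2⟩
  · have hm : ∀ y ∈ hyp Y c₀, ∃ z ∈ Y, Rep (evX X (ψ y c)) z := fun y hy => M.maps _ (hcA y hy).1
    choose! z hzY hzR using hm
    symm
    refine Set.ncard_congr (fun y _ => z y) ?_ ?_ ?_
    · intro y hy
      exact (mem_hyp (hzR y hy)).2 ⟨hzY y hy, by rw [← ev_TT]; exact (hcA y hy).2.1⟩
    · intro y y' hy hy' he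
      refine hcI y hy y' hy' (M.inj (hcA y hy).1 (hcA y' hy').1 (hzR y hy) ?_)
      rw [show z y = z y' from he]
      exact hzR y' hy'
    · intro w hw
      obtain ⟨y, hy, hyw⟩ := hcS' w hw
      exact ⟨y, hy, (hzR y hy).unique hyw⟩

end SegreCurve

/-! ### Constancy of the intersection number -/

namespace SegreCurve

open Polynomial Filter Topology

variable {n : Bool → ℕ} {Y : Set (PStack n)} {P g : ℂ[X][X]}
  {X : (i : Bool) × Fin (n i + 1) → ℂ[X][X]}

lemma subsingleton_zeros {x y : ℂ} (hx : x ≠ 0) : {s : ℂ | x + s * y = 0}.Finite := by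
  apply Set.Subsingleton.finite
  intro s hs s' hs'
  have hs : x + s * y = 0 := hs
  have hs' : x + s' * y = 0 := hs'
  have hy : y ≠ 0 := by rintro rfl; exact hx (by simpa using hs)
  refine mul_right_cancel₀ hy ?_
  linear_combination (-1 : ℂ) * hs' + hs

/-- A line through a good bilinear form contains only finitely many forms that are not good. -/
lemma good_line (M : IsModel Y P g X) {c₀ : SIdx n → ℂ} (hc₀ : c₀ ∈ good Y P g X)
    (c₁ : SIdx n → ℂ) : {s : ℂ | c₀ + s • c₁ ∉ good Y P g X}.Finite := by
  have h1 := pencil M.toIsPlaneModel (TT X c₀) (TT X c₁) (by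
    intro p hp e1 _ e2 _
    obtain ⟨y, hy, hr⟩ := M.maps p hp
    have : y ∈ hyp Y c₀ := (mem_hyp hr).2 ⟨hy, by rw [← ev_TT]; exact e1⟩
    obtain ⟨q, hq, hqr, hJ⟩ := hc₀ y this
    rw [M.inj hq hp hqr hr] at hJ
    exact hJ e2)
  have h2 : (⋃ y ∈ {y ∈ Y | ¬ ∃ p ∈ Gam P g, Rep (evX X p) y},
      {s : ℂ | y ∈ hyp Y (c₀ + s • c₁)}).Finite := by
    refine M.bad_finite.biUnion fun y hy => ?_
    obtain ⟨v, hv⟩ := exists_rep y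
    have h0 : pair c₀ v ≠ 0 := by
      intro h0
      obtain ⟨p, hp, hr, -⟩ := hc₀ y ((mem_hyp hv).2 ⟨hy.1, h0⟩)
      exact hy.2 ⟨p, hp, hr⟩
    refine (subsingleton_zeros (y := pair c₁ v) h0).subset fun s hs => ?_
    have := hs.2 v hv
    rwa [pair_add_smul] at this
  refine (h1.union h2).subset ?_
  intro s hs
  have hs : ¬ ∀ y ∈ hyp Y (c₀ + s • c₁), ∃ p ∈ Gam P g, Rep (evX X p) y ∧
    ev p (DP P (TT X (c₀ + s • c₁))) ≠ 0 := hs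
  push Not at hs
  obtain ⟨y, hy, hbad⟩ := hs
  by_cases hex : ∃ p ∈ Gam P g, Rep (evX X p) y
  · left
    obtain ⟨p, hp, hr⟩ := hex
    refine ⟨p, hp, ?_, ?_⟩
    · rw [← TT_add_smul, ev_TT]; exact hy.2 _ hr
    · rw [← TT_add_smul]; exact hbad p hp hr
  · right
    exact Set.mem_biUnion (x := y) ⟨hy.1, hex⟩ hy

lemma finite_compl_mem {s : Set ℂ} (hs : s.Finite) : Dense sᶜ :=
  hs.countable.dense_compl ℝ

lemma isOpen_good (hY : IsAlgebraicSet Y) (M : IsModel Y P g X) : IsOpen (good Y P g X) :=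
  isOpen_iff_mem_nhds.2 fun _ hc => (good_locally_constant hY M hc).mono fun _ h => h.1

/-- A set is dense if every line through a fixed point `c₀` meets its complement in a finite set. -/
lemma dense_of_line {V : Type*} [AddCommGroup V] [Module ℂ V] [TopologicalSpace V]
    [ContinuousAdd V] [ContinuousSMul ℂ V] {W : Set V} {c₀ : V}
    (h : ∀ c₁, {s : ℂ | c₀ + s • c₁ ∉ W}.Finite) : Dense W := by
  intro c
  have hd := finite_compl_mem (h (c - c₀))
  have hcont : Continuous fun s : ℂ => c₀ + s • (c - c₀) := by fun_prop
  have h1 : (1 : ℂ) ∈ closure {s : ℂ | c₀ + s • (c - c₀) ∉ W}ᶜ := hd 1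
  have h2 := image_closure_subset_closure_image hcont ⟨1, h1, rfl⟩
  simp only [one_smul, add_sub_cancel] at h2
  refine closure_mono ?_ h2
  rintro _ ⟨s, hs, rfl⟩
  exact not_not.1 hs

/-- The number of intersection points with `Y` is the same for all good bilinear forms: it is
locally constant on the good part of the line joining two of them, and the complement of a finite
set in `ℂ` is connected. -/
lemma good_const (hY : IsAlgebraicSet Y) (M : IsModel Y P g X) {c₀ c₁ : SIdx n → ℂ}
    (h₀ : c₀ ∈ good Y P g X) (h₁ : c₁ ∈ good Y P g X) :
    (hyp Y c₀).ncard = (hyp Y c₁).ncard := by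
  have hfin := good_line M h₀ (c₁ - c₀)
  have hcon : IsPreconnected {s : ℂ | c₀ + s • (c₁ - c₀) ∉ good Y P g X}ᶜ :=
    (hfin.countable.isPathConnected_compl_of_one_lt_rank
      (by rw [Complex.rank_real_complex]; norm_num)).isConnected.isPreconnected
  have hcont : Continuous fun s : ℂ => c₀ + s • (c₁ - c₀) := by fun_prop
  have := hcon.constant (f := fun s : ℂ => (hyp Y (c₀ + s • (c₁ - c₀))).ncard) (by
    intro s hs
    have hs : c₀ + s • (c₁ - c₀) ∈ good Y P g X := not_not.1 hs
    refine ContinuousAt.continuousWithinAt ?_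
    refine (continuousAt_const (y := (hyp Y (c₀ + s • (c₁ - c₀))).ncard)).congr ?_
    filter_upwards [hcont.continuousAt.eventually (good_locally_constant hY M hs)] with t ht
    exact ht.2.symm) (x := 0) (y := 1) (by simpa using h₀) (by simpa using h₁)
  simpa using this

/-! ### Products of linear forms -/

lemma sum_add_single {m : ℕ} (a w : Fin m → ℂ) (s : ℂ) (j : Fin m) :
    ∑ k, (a + s • (Pi.single j 1 : Fin m → ℂ)) k * w k = ∑ k, a k * w k + s * w j := by
  simp only [Pi.add_apply, Pi.smul_apply, smul_eq_mul, add_mul, Finset.sum_add_distrib,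
    Pi.single_apply]
  simp

/-- A linear form that vanishes at none of finitely many given nonzero vectors. -/
lemma exists_linear_ne {m : ℕ} (F : Set (Fin m → ℂ)) (hF : F.Finite) (h0 : ∀ v ∈ F, v ≠ 0) :
    ∃ a : Fin m → ℂ, ∀ v ∈ F, ∑ k, a k * v k ≠ 0 := by
  induction F, hF using Set.Finite.induction_on with
  | empty => exact ⟨0, by simp⟩
  | @insert v F hv hF ih =>
    obtain ⟨a, ha⟩ := ih fun w hw => h0 w (Set.mem_insert_of_mem _ hw)
    obtain ⟨j, hj⟩ := Function.ne_iff.1 (h0 v (Set.mem_insert _ _))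
    have hj : v j ≠ 0 := hj
    have hfin : ({s : ℂ | s * v j + ∑ k, a k * v k = 0} ∪
        ⋃ w ∈ F, {s : ℂ | ∑ k, a k * w k + s * w j = 0}).Finite := by
      refine Set.Finite.union ?_ (hF.biUnion fun w hw => subsingleton_zeros (ha w hw))
      apply Set.Subsingleton.finite
      intro s hs s' hs'
      have hs : s * v j + ∑ k, a k * v k = 0 := hs
      have hs' : s' * v j + ∑ k, a k * v k = 0 := hs'
      exact mul_right_cancel₀ hj (by linear_combination hs - hs')
    obtain ⟨s, hs⟩ := hfin.exists_notMem
    refine ⟨a + s • Pi.single j 1, ?_⟩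
    rintro w (rfl | hw)
    · rw [sum_add_single]
      intro h
      exact hs (Or.inl (by rw [Set.mem_ofPred_eq]; linear_combination h))
    · rw [sum_add_single]
      intro h
      exact hs (Or.inr (Set.mem_biUnion hw h))

/-- The pullback to the plane model of a linear form on one of the two factors. -/
noncomputable def LL (X : (i : Bool) × Fin (n i + 1) → ℂ[X][X]) (i : Bool)
    (a : Fin (n i + 1) → ℂ) : ℂ[X][X] := ∑ k, C (C (a k)) * X ⟨i, k⟩

lemma ev_LL (i : Bool) (a : Fin (n i + 1) → ℂ) (p : ℂ × ℂ) :
    ev p (LL X i a) = ∑ k, a k * evX X p i k := by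
  simp only [LL, evX, map_sum, map_mul]
  exact Finset.sum_congr rfl fun a _ => by simp

lemma TT_tens (a : Vec n) : TT X (tens a) = ∏ i, LL X i (a i) := by
  simp only [LL, Finset.prod_univ_sum, TT, tens, Fintype.piFinset_univ, map_prod,
    Finset.prod_mul_distrib]

/-- The points of `Y` on the divisor of a linear form on the `i`-th factor. -/
def hypL (Y : Set (PStack n)) (i : Bool) (a : Fin (n i + 1) → ℂ) : Set (PStack n) :=
  {y ∈ Y | PLinVanish a (y i)}

lemma mem_hypL {v : Vec n} {y : PStack n} (h : Rep v y) (i : Bool) (a : Fin (n i + 1) → ℂ) :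
    y ∈ hypL Y i a ↔ y ∈ Y ∧ ∑ k, a k * v i k = 0 := by
  rw [← plin_iff h]; rfl

/-- On each factor there is a linear form whose divisor avoids a given finite set and is
transversal to the plane model. -/
lemma exists_good_linear (M : IsModel Y P g X) (i : Bool) (F : Set (PStack n)) (hF : F.Finite) :
    ∃ a : Fin (n i + 1) → ℂ, (∀ y ∈ F, ¬ PLinVanish a (y i)) ∧
      ∀ p ∈ Gam P g, ev p (LL X i a) = 0 → ev p (DP P (LL X i a)) ≠ 0 := by
  obtain ⟨j, hj⟩ := M.chart
  choose r hr using exists_rep (n := n)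
  obtain ⟨a₀, ha₀⟩ := exists_linear_ne ((fun y => r y i) '' F) (hF.image _) (by
    rintro _ ⟨y, -, rfl⟩
    exact (hr y).ne i)
  have h1 := pencil M.toIsPlaneModel (LL X i a₀) (X ⟨i, j i⟩)
    (fun p hp _ h _ _ => hj p hp i h)
  have h2 : (⋃ y ∈ F, {s : ℂ | ∑ k, a₀ k * r y i k + s * r y i (j i) = 0}).Finite :=
    hF.biUnion fun y hy => subsingleton_zeros (ha₀ _ ⟨y, hy, rfl⟩)
  obtain ⟨s, hs⟩ := (h1.union h2).exists_notMem
  have key : LL X i (a₀ + s • Pi.single (j i) 1) = LL X i a₀ + C (C s) * X ⟨i, j i⟩ := by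
    have : ∀ k, C (C ((a₀ + s • (Pi.single (j i) 1 : Fin (n i + 1) → ℂ)) k)) * X ⟨i, k⟩ =
        C (C (a₀ k)) * X ⟨i, k⟩ + if k = j i then C (C s) * X ⟨i, k⟩ else 0 := by
      intro k
      by_cases h : k = j i
      · subst h
        simp [add_mul]
      · simp [h]
    simp only [LL, this, Finset.sum_add_distrib]
    simp
  refine ⟨a₀ + s • Pi.single (j i) 1, ?_, ?_⟩
  · intro y hy
    rw [plin_iff (hr y), sum_add_single]
    intro h
    exact hs (Or.inr (Set.mem_biUnion hy h))
  · intro p hp h hD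
    rw [key] at h hD
    exact hs (Or.inl ⟨p, hp, h, hD⟩)

/-- There is a good bilinear form that is a product of two linear forms. -/
lemma exists_tens_good (M : IsModel Y P g X) : ∃ a : Vec n, tens a ∈ good Y P g X := by
  obtain ⟨a, ha1, ha2⟩ := exists_good_linear M false _ M.bad_finite
  have hfin : (hypL Y false a).Finite := by
    have hfin : {p ∈ Gam P g | ev p (LL X false a) = 0}.Finite := by
      rcases M.finite_or_dvd (LL X false a) with h | h
      · exact h
      · refine Set.finite_empty.subset ?_
        rintro p ⟨hp, h2⟩
        exact ha2 p hp h2 (ev_DP_of_dvd h hp.1)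
    refine (hfin.biUnion (t := fun p => {y | Rep (evX X p) y}) fun p _ =>
      Set.Subsingleton.finite fun y hy y' hy' => hy.unique hy').subset ?_
    intro y hy
    have hex : ∃ p ∈ Gam P g, Rep (evX X p) y := by
      by_contra hne
      exact ha1 y ⟨hy.1, hne⟩ hy.2
    obtain ⟨p, hp, hr⟩ := hex
    refine Set.mem_biUnion (x := p) ⟨hp, ?_⟩ hr
    rw [ev_LL]
    exact ((mem_hypL hr _ _).1 hy).2
  obtain ⟨b, hb1, hb2⟩ := exists_good_linear M true _ (M.bad_finite.union hfin)
  refine ⟨fun i => match i with | false => a | true => b, ?_⟩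
  intro y hy
  obtain ⟨v, hv⟩ := exists_rep y
  have h0 := hy.2 v hv
  rw [pair_tens, Fintype.prod_bool, mul_eq_zero] at h0
  have h0' : PLinVanish b (y true) ∨ PLinVanish a (y false) :=
    h0.imp (plin_iff hv true b).2 (plin_iff hv false a).2
  have hex : ∃ p ∈ Gam P g, Rep (evX X p) y := by
    by_contra hne
    rcases h0' with h | h
    · exact hb1 y (Or.inl ⟨hy.1, hne⟩) h
    · exact ha1 y ⟨hy.1, hne⟩ h
  obtain ⟨p, hp, hr⟩ := hex
  refine ⟨p, hp, hr, ?_⟩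
  rw [TT_tens, Fintype.prod_bool, DP_mul]
  simp only [map_add, map_mul]
  have ea : ev p (LL X false a) = 0 ↔ PLinVanish a (y false) := by
    rw [ev_LL, plin_iff hr]
  have eb : ev p (LL X true b) = 0 ↔ PLinVanish b (y true) := by
    rw [ev_LL, plin_iff hr]
  have hnot : PLinVanish a (y false) → ¬ PLinVanish b (y true) := fun h =>
    hb1 y (Or.inr ⟨hy.1, h⟩)
  rcases h0' with h | h
  · have h1 : ev p (LL X false a) ≠ 0 := fun h' => hnot (ea.1 h') h
    rw [eb.2 h, zero_mul, add_zero]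
    exact mul_ne_zero (hb2 p hp (eb.2 h)) h1
  · have h1 : ev p (LL X true b) ≠ 0 := fun h' => hnot h (eb.1 h')
    rw [ea.2 h, mul_zero, zero_add]
    exact mul_ne_zero h1 (ha2 p hp (ea.2 h))

end SegreCurve

/-! ### Degrees in the two directions -/

namespace SegreCurve

open Polynomial Filter Topology

variable {n : Bool → ℕ} {Y : Set (PStack n)} {P g : ℂ[X][X]}
  {X : (i : Bool) × Fin (n i + 1) → ℂ[X][X]}

lemma tens_update (a : Vec n) (i : Bool) (y : Fin (n i + 1) → ℂ) (s : ℂ) :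
    tens (Function.update a i (a i + s • y)) = tens a + s • tens (Function.update a i y) := by
  funext k
  cases i <;> simp [tens, Function.update] <;> ring

/-- The pairs of linear forms whose product is good. -/
def goodPairs (Y : Set (PStack n)) (P g : ℂ[X][X]) (X : (i : Bool) × Fin (n i + 1) → ℂ[X][X]) :
    Set (Vec n) := {a | tens a ∈ good Y P g X}

lemma goodPairs_line (M : IsModel Y P g X) {a : Vec n} (ha : a ∈ goodPairs Y P g X) (i : Bool)
    (y : Fin (n i + 1) → ℂ) :
    {s : ℂ | Function.update a i (a i + s • y) ∉ goodPairs Y P g X}.Finite := by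
  refine (good_line M ha (tens (Function.update a i y))).subset fun s hs => ?_
  rw [Set.mem_ofPred_eq, ← tens_update]
  exact hs

lemma isOpen_goodPairs (hY : IsAlgebraicSet Y) (M : IsModel Y P g X) :
    IsOpen (goodPairs Y P g X) := by
  have : Continuous (tens : Vec n → SIdx n → ℂ) := by unfold tens; fun_prop
  exact (isOpen_good hY M).preimage this

lemma dense_goodPairs (M : IsModel Y P g X) : Dense (goodPairs Y P g X) := by
  obtain ⟨a, ha⟩ := exists_tens_good M
  have h1 : ∀ i, ∀ a ∈ goodPairs Y P g X,
      Dense {x : Fin (n i + 1) → ℂ | Function.update a i x ∈ goodPairs Y P g X} := by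
    intro i a ha
    exact dense_of_line (c₀ := a i) fun y => goodPairs_line M ha i y
  intro b
  rw [mem_closure_iff]
  intro O hO hb
  have hc1 : Continuous fun x : Fin (n false + 1) → ℂ => Function.update b false x :=
    continuous_const.update _ continuous_id
  have hc2 : ∀ a : Vec n, Continuous fun x : Fin (n true + 1) → ℂ => Function.update a true x :=
    fun a => continuous_const.update _ continuous_id
  obtain ⟨x, hxO, hx⟩ := (h1 false a ha).inter_open_nonempty _ (hO.preimage hc1)
    ⟨b false, by rw [Set.mem_preimage, Function.update_eq_self]; exact hb⟩
  set b' := Function.update b false x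
  set a' := Function.update a false x
  obtain ⟨z, hzO, hz⟩ := (h1 true a' hx).inter_open_nonempty _ (hO.preimage (hc2 b'))
    ⟨b true, by
      have : Function.update b' true (b true) = b' := by
        rw [show b true = b' true by simp [b'], Function.update_eq_self]
      rw [Set.mem_preimage, this]
      exact hxO⟩
  refine ⟨Function.update b' true z, hzO, ?_⟩
  have : Function.update b' true z = Function.update a' true z := by
    funext j
    cases j <;> simp [a', b', Function.update]
  rw [this]
  exact hz

lemma hyp_tens (a : Vec n) : hyp Y (tens a) = hypL Y false (a false) ∪ hypL Y true (a true) := by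
  ext y
  obtain ⟨v, hv⟩ := exists_rep y
  rw [Set.mem_union, mem_hypL hv, mem_hypL hv, mem_hyp hv, pair_tens, Fintype.prod_bool,
    mul_eq_zero]
  tauto

lemma hypL_finite (M : IsModel Y P g X) {a : Vec n} (ha : a ∈ goodPairs Y P g X) (i : Bool) :
    (hypL Y i (a i)).Finite := by
  refine (hyp_finite M ha).subset ?_
  rw [hyp_tens]
  cases i
  · exact Set.subset_union_left
  · exact Set.subset_union_right

/-- Transversality makes the divisors of the two factors of a good product disjoint on `Y`. -/
lemma ncard_hyp_tens (M : IsModel Y P g X) {a : Vec n} (ha : a ∈ goodPairs Y P g X) (i : Bool) :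
    (hyp Y (tens a)).ncard = (hypL Y i (a i)).ncard + (hypL Y (!i) (a !i)).ncard := by
  have hdis : Disjoint (hypL Y false (a false)) (hypL Y true (a true)) := by
    rw [Set.disjoint_left]
    intro y h1 h2
    obtain ⟨p, hp, hr, hJ⟩ := ha y (by rw [hyp_tens]; exact Or.inl h1)
    apply hJ
    rw [mem_hypL hr, ← ev_LL] at h1 h2
    rw [TT_tens, Fintype.prod_bool, DP_mul]
    simp only [map_add, map_mul, h1.2, h2.2, mul_zero, zero_mul, add_zero]
  have := Set.ncard_union_eq hdis (hypL_finite M ha false) (hypL_finite M ha true)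
  rw [hyp_tens, this]
  cases i
  · rfl
  · exact add_comm _ _

/-- The number of zeros on `Y` of the `i`-th form of a good pair does not depend on the pair: two
pairs can be moved along lines, without changing their `i`-th forms, until their other forms
agree, and the total number of zeros is constant. -/
lemma ncard_hypL_const (hY : IsAlgebraicSet Y) (M : IsModel Y P g X) {a b : Vec n}
    (ha : a ∈ goodPairs Y P g X) (hb : b ∈ goodPairs Y P g X) (i : Bool) :
    (hypL Y i (a i)).ncard = (hypL Y i (b i)).ncard := by
  have h1 := goodPairs_line M ha (!i) (b (!i) - a !i)
  have h2 := (goodPairs_line M hb (!i) (a (!i) - b !i)).preimage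
    (f := fun s : ℂ => 1 - s) (fun x _ y _ h => by simpa using h)
  obtain ⟨s, hs⟩ := (h1.union h2).exists_notMem
  rw [Set.mem_union, not_or] at hs
  have ha' := not_not.1 hs.1
  have hb' : Function.update b (!i) (b (!i) + (1 - s) • (a (!i) - b !i)) ∈ goodPairs Y P g X :=
    not_not.1 hs.2
  have he : b (!i) + (1 - s) • (a (!i) - b !i) = a (!i) + s • (b (!i) - a !i) := by
    funext k
    simp only [Pi.add_apply, Pi.smul_apply, Pi.sub_apply, smul_eq_mul]
    ring
  rw [he] at hb'
  have e1 := ncard_hyp_tens M ha' i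
  have e2 := ncard_hyp_tens M hb' i
  have hni : i ≠ !i := by cases i <;> simp
  rw [good_const hY M ha' hb', e2] at e1
  simp only [Function.update_self, Function.update_of_ne hni] at e1
  omega

/-- The linear form of a slice whose type is `1` in direction `i`. -/
def proj (e : Bool → ℕ) (i : Bool) (hei : e i = 1) (L : SliceParams n e) : Fin (n i + 1) → ℂ :=
  L i ⟨0, by omega⟩

lemma inter_sliceZeros (e : Bool → ℕ) (i : Bool) (hei : e i = 1) (hej : e (!i) = 0)
    (L : SliceParams n e) : Y ∩ SliceZeros L = hypL Y i (proj e i hei L) := by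
  ext y
  constructor
  · rintro ⟨h1, h2⟩
    exact ⟨h1, h2 i _⟩
  · rintro ⟨h1, h2⟩
    refine ⟨h1, fun k j => ?_⟩
    by_cases hk : k = i
    · subst hk
      have : j = ⟨0, by omega⟩ := by
        apply Fin.ext
        have := j.2
        simp only
        omega
      rw [this]
      exact h2
    · have hk' : k = !i := by cases i <;> cases k <;> simp_all
      subst hk'
      exact absurd j.2 (by omega)

lemma continuous_proj (e : Bool → ℕ) (i : Bool) (hei : e i = 1) :
    Continuous (proj (n := n) e i hei) :=
  (continuous_apply _).comp (continuous_apply i)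

lemma isOpenMap_proj (e : Bool → ℕ) (i : Bool) (hei : e i = 1) :
    IsOpenMap (proj (n := n) e i hei) := by
  have h1 : IsOpenMap fun L : SliceParams n e => L i := isOpenMap_eval i
  have h2 : IsOpenMap fun l : Fin (e i) → Fin (n i + 1) → ℂ => l ⟨0, by omega⟩ :=
    isOpenMap_eval _
  exact h2.comp h1

lemma proj_surjective (e : Bool → ℕ) (i : Bool) (hei : e i = 1) :
    Function.Surjective (proj (n := n) e i hei) := by
  intro x
  exact ⟨Function.update 0 i fun _ => x, by simp [proj]⟩

/-- Comparison of the degree of `Y` in direction `i` with the number of intersection points of `Y`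
with the divisor of a linear form of a good pair. -/
lemma deg_eq (hY : IsAlgebraicSet Y) (M : IsModel Y P g X) (i : Bool) (e : Bool → ℕ)
    (hei : e i = 1) (hej : e (!i) = 0) (d : ℕ) (hd : e ∈ MDim Y → DegIs Y e d)
    (hd' : e ∉ MDim Y → d = 0) {a : Vec n} (ha : a ∈ goodPairs Y P g X) :
    (hypL Y i (a i)).ncard = d := by
  let pr : SliceParams n e → (Fin (n i + 1) → ℂ) := proj e i hei
  have hsl : ∀ L : SliceParams n e, Y ∩ SliceZeros L = hypL Y i (pr L) :=
    inter_sliceZeros e i hei hej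
  have hprc : Continuous pr := continuous_proj e i hei
  have hpro : IsOpenMap pr := isOpenMap_proj e i hei
  set V : Set (Fin (n i + 1) → ℂ) := (fun a : Vec n => a i) '' goodPairs Y P g X
  have hVo : IsOpen V := isOpenMap_eval i _ (isOpen_goodPairs hY M)
  have hVd : Dense V :=
    (Function.surjective_eval i).denseRange.dense_image (continuous_apply i) (dense_goodPairs M)
  have hVc : ∀ x ∈ V, (hypL Y i x).Finite ∧ (hypL Y i x).ncard = (hypL Y i (a i)).ncard := by
    rintro _ ⟨b, hb, rfl⟩
    exact ⟨hypL_finite M hb i, ncard_hypL_const hY M hb ha i⟩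
  by_cases hm : e ∈ MDim Y
  · obtain ⟨U, hUo, hUd, hU⟩ := hd hm
    obtain ⟨L, hLU, hLV⟩ := (hVd.preimage hpro).inter_open_nonempty U hUo hUd.nonempty
    have := (hU L hLU).2
    rw [hsl, (hVc _ hLV).2] at this
    exact this
  · rw [hd' hm]
    by_contra hne
    apply hm
    refine ⟨?_, pr ⁻¹' V, hVo.preimage hprc, hVd.preimage hpro, fun L hL => ?_⟩
    · have hi : e i ≤ n i := by
        rw [hei, Nat.one_le_iff_ne_zero]
        intro hn
        obtain ⟨x, hx0, hxV⟩ := hVd.inter_open_nonempty {0}ᶜ isOpen_compl_singleton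
          ⟨1, by simp⟩
        have : (hypL Y i x).Nonempty := by
          rw [← Set.ncard_pos (hVc x hxV).1, (hVc x hxV).2]
          exact Nat.pos_of_ne_zero hne
        obtain ⟨y, hy⟩ := this
        obtain ⟨v, hv⟩ := exists_rep y
        have h1 := ((mem_hypL hv i x).1 hy).2
        have hsub : Subsingleton (Fin (n i + 1)) := ⟨fun a b => by apply Fin.ext; omega⟩
        obtain ⟨k, hk⟩ := Function.ne_iff.1 (hv.ne i)
        rw [Fintype.sum_subsingleton _ k, mul_eq_zero] at h1
        apply hx0
        rw [Set.mem_singleton_iff]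
        funext k'
        rw [Subsingleton.elim k' k]
        exact h1.resolve_right hk
      intro k
      by_cases hk : k = i
      · rw [hk]; exact hi
      · have hk' : k = !i := by cases i <;> cases k <;> simp_all
        rw [hk', hej]; exact Nat.zero_le _
    · change (Y ∩ SliceZeros L).Finite ∧ (Y ∩ SliceZeros L).Nonempty
      rw [hsl]
      refine ⟨(hVc _ hL).1, ?_⟩
      rw [← Set.ncard_pos (hVc _ hL).1, (hVc _ hL).2]
      exact Nat.pos_of_ne_zero hne

/-- The degree formula for a curve with a plane model: the degree of the Segre image is computed by
a good product of two linear forms. -/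
lemma final_of_model (hY : IsAlgebraicSet Y) (M : IsModel Y P g X)
    (σ : PStack n → Projectivization ℂ (((i : Bool) → Fin (n i + 1)) → ℂ))
    (hσ : IsSegreMap n σ)
    (d₁ d₂ : ℕ)
    (hd₁ : ((fun t => if t then 0 else 1) : Bool → ℕ) ∈ MDim Y →
      DegIs Y (fun t => if t then 0 else 1) d₁)
    (hd₁' : ((fun t => if t then 0 else 1) : Bool → ℕ) ∉ MDim Y → d₁ = 0)
    (hd₂ : ((fun t => if t then 1 else 0) : Bool → ℕ) ∈ MDim Y →
      DegIs Y (fun t => if t then 1 else 0) d₂)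
    (hd₂' : ((fun t => if t then 1 else 0) : Bool → ℕ) ∉ MDim Y → d₂ = 0) :
    ProjDegIs (σ '' Y) 1 (d₁ + d₂) := by
  obtain ⟨a, ha⟩ := exists_tens_good M
  have e1 := deg_eq hY M false (fun t => if t then 0 else 1) rfl rfl d₁ hd₁ hd₁' ha
  have e2 := deg_eq hY M true (fun t => if t then 1 else 0) rfl rfl d₂ hd₂ hd₂' ha
  have e3 := ncard_hyp_tens M ha false
  rw [e1, Bool.not_false, e2] at e3
  have ho : IsOpenMap fun c : Fin 1 → SIdx n → ℂ => c 0 := isOpenMap_eval 0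
  refine ⟨(fun c => c 0) ⁻¹' good Y P g X, (isOpen_good hY M).preimage (continuous_apply 0),
    (dense_of_line fun c₁ => good_line M ha c₁).preimage ho, fun c hc => ?_⟩
  have hset : σ '' Y ∩ {p | ∀ j, PLinVanish (c j) p} = σ '' hyp Y (c 0) := by
    ext q
    constructor
    · rintro ⟨⟨y, hy, rfl⟩, h⟩
      obtain ⟨v, hv⟩ := exists_rep y
      exact ⟨y, (mem_hyp hv).2 ⟨hy, (segre_plin_iff hσ hv _).1 (h 0)⟩, rfl⟩
    · rintro ⟨y, hy, rfl⟩
      refine ⟨⟨y, hy.1, rfl⟩, fun j => ?_⟩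
      obtain ⟨v, hv⟩ := exists_rep y
      rw [Subsingleton.elim j 0, segre_plin_iff hσ hv]
      exact hy.2 v hv
  beta_reduce
  rw [hset, Set.ncard_image_of_injective _ (segre_injective hσ)]
  exact ⟨(hyp_finite M hc).image _, by rw [good_const hY M hc ha, e3]⟩

end SegreCurve

namespace SegreCurve

open Polynomial Filter Topology

/-! ### Clearing denominators -/

/-- Clearing denominators in a polynomial expression, uniformly over all specializations: `F` is
the numerator of `f` after substituting the fractions `m k / b` for the variables. -/
lemma exists_num {S κ : Type} [CommRing S] (b : S) (m : κ → S) (f : MvPolynomial κ S) :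
    ∃ (N : ℕ) (F : S), ∀ (L : Type) [CommRing L] (φ : S →+* L) (ζ : κ → L),
      (∀ k, ζ k * φ b = φ (m k)) → φ b ^ N * MvPolynomial.eval₂ φ ζ f = φ F := by
  induction f using MvPolynomial.induction_on with
  | C a => exact ⟨0, a, fun L _ φ ζ _ => by simp⟩
  | add p q hp hq =>
    obtain ⟨N, F, h⟩ := hp
    obtain ⟨N', F', h'⟩ := hq
    refine ⟨N + N', b ^ N' * F + b ^ N * F', fun L _ φ ζ hz => ?_⟩
    rw [MvPolynomial.eval₂_add, map_add, map_mul, map_mul, ← h L φ ζ hz, ← h' L φ ζ hz, map_pow,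
      map_pow]
    ring
  | mul_X p k hp =>
    obtain ⟨N, F, h⟩ := hp
    refine ⟨N + 1, F * m k, fun L _ φ ζ hz => ?_⟩
    rw [MvPolynomial.eval₂_mul, MvPolynomial.eval₂_X, map_mul, ← h L φ ζ hz, ← hz k]
    ring

/-- The one-variable version of `exists_num`. -/
lemma exists_num_poly {S : Type} [CommRing S] (b m : S) (f : S[X]) :
    ∃ (N : ℕ) (F : S), ∀ (L : Type) [CommRing L] (φ : S →+* L) (z : L),
      z * φ b = φ m → φ b ^ N * Polynomial.eval₂ φ z f = φ F := by
  induction f using Polynomial.induction_on' with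
  | monomial k a =>
    refine ⟨k, a * m ^ k, fun L _ φ z hz => ?_⟩
    rw [eval₂_monomial, map_mul, map_pow, ← hz]
    ring
  | add p q hp hq =>
    obtain ⟨N, F, h⟩ := hp
    obtain ⟨N', F', h'⟩ := hq
    refine ⟨N + N', b ^ N' * F + b ^ N * F', fun L _ φ ζ hz => ?_⟩
    rw [eval₂_add, map_add, map_mul, map_mul, ← h L φ ζ hz, ← h' L φ ζ hz, map_pow, map_pow]
    ring

/-! ### Affine varieties -/

/-- An irreducible Zariski closed subset of an affine space. -/
structure IsIrrClosed {κ : Type} (Z : Set (κ → ℂ)) : Prop where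
  nonempty : Z.Nonempty
  prime : ∀ f g : MvPolynomial κ ℂ, (∀ w ∈ Z, MvPolynomial.eval w (f * g) = 0) →
    (∀ w ∈ Z, MvPolynomial.eval w f = 0) ∨ ∀ w ∈ Z, MvPolynomial.eval w g = 0
  closed : ∀ w, (∀ f : MvPolynomial κ ℂ, (∀ z ∈ Z, MvPolynomial.eval z f = 0) →
    MvPolynomial.eval w f = 0) → w ∈ Z

/-- Substitution of two polynomials into a bivariate one. -/
noncomputable def sub2 {κ : Type} (u v : MvPolynomial κ ℂ) : ℂ[X][X] →+* MvPolynomial κ ℂ :=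
  eval₂RingHom (aeval u).toRingHom v

lemma eval_sub2 {κ : Type} (u v : MvPolynomial κ ℂ) (w : κ → ℂ) (R : ℂ[X][X]) :
    MvPolynomial.eval w (sub2 u v R) = ev (MvPolynomial.eval w u, MvPolynomial.eval w v) R := by
  have : (MvPolynomial.eval w).comp (sub2 u v) =
      ev (MvPolynomial.eval w u, MvPolynomial.eval w v) := by
    refine Polynomial.ringHom_ext' (Polynomial.ringHom_ext (fun a => ?_) ?_) ?_ <;>
      simp [sub2, ev]
  exact RingHom.congr_fun this R

/-- If `u` is algebraically dependent on `v`, and `v` does not vanish identically on `Z`, then `u`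
takes finitely many values on the zero set of `v` in `Z`. -/
lemma finite_values {κ : Type} {Z : Set (κ → ℂ)} (hZ : IsIrrClosed Z) {u v : MvPolynomial κ ℂ}
    (hv : ∃ w ∈ Z, MvPolynomial.eval w v ≠ 0) :
    ∀ (d : ℕ) (R : ℂ[X][X]), R.natDegree = d → R ≠ 0 →
    (∀ w ∈ Z, MvPolynomial.eval w (sub2 u v R) = 0) →
    {c | ∃ w ∈ Z, MvPolynomial.eval w v = 0 ∧ MvPolynomial.eval w u = c}.Finite := by
  intro d
  induction d with
  | zero =>
    intro R hd hR h
    obtain ⟨c, rfl⟩ := natDegree_eq_zero.1 hd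
    have hc : c ≠ 0 := by rintro rfl; simp at hR
    refine (Polynomial.finite_setOfPred_isRoot hc).subset ?_
    rintro _ ⟨w, hw, -, rfl⟩
    have := h w hw
    rw [eval_sub2] at this
    simpa [ev] using this
  | succ d ih =>
    intro R hd hR h
    by_cases h0 : R.coeff 0 = 0
    · have hX : R = X * R.divX := by
        conv_lhs => rw [← R.divX_mul_X_add, h0, C_0, add_zero, mul_comm]
      refine ih R.divX (by rw [natDegree_divX_eq_natDegree_tsub_one, hd]; rfl) ?_ ?_
      · intro h1; rw [h1, mul_zero] at hX; exact hR hX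
      · have h2 : sub2 u v R = v * sub2 u v R.divX := by
          conv_lhs => rw [hX, map_mul]
          congr 1
          simp [sub2]
        rw [h2] at h
        refine (hZ.prime _ _ h).resolve_left fun h3 => ?_
        obtain ⟨w, hw, hne⟩ := hv
        exact hne (h3 w hw)
    · refine (Polynomial.finite_setOfPred_isRoot h0).subset ?_
      rintro _ ⟨w, hw, hw0, rfl⟩
      have := h w hw
      rw [eval_sub2, hw0] at this
      simpa [ev, evalEval, ← coeff_zero_eq_eval_zero, IsRoot] using this

/-- If a nonconstant function `f` on `Z` is algebraically related to every polynomial, then every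
polynomial that does not vanish identically on `Z` has finitely many zeros on `Z`. -/
lemma finite_zeros {κ : Type} [Finite κ] {Z : Set (κ → ℂ)} (hZ : IsIrrClosed Z)
    {f : MvPolynomial κ ℂ} (hf : ∀ s : ℂ, ∃ w ∈ Z, MvPolynomial.eval w (f - MvPolynomial.C s) ≠ 0)
    (hd : ∀ u, ∃ R : ℂ[X][X], R ≠ 0 ∧ ∀ w ∈ Z, MvPolynomial.eval w (sub2 f u R) = 0)
    (hd' : ∀ u (s : ℂ), ∃ R : ℂ[X][X], R ≠ 0 ∧
      ∀ w ∈ Z, MvPolynomial.eval w (sub2 u (f - MvPolynomial.C s) R) = 0)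
    {v : MvPolynomial κ ℂ} (hv : ∃ w ∈ Z, MvPolynomial.eval w v ≠ 0) :
    {w ∈ Z | MvPolynomial.eval w v = 0}.Finite := by
  obtain ⟨R, hR, h⟩ := hd v
  have h1 := finite_values hZ hv _ R rfl hR h
  have h2 : ∀ s : ℂ, {w ∈ Z | MvPolynomial.eval w f = s}.Finite := by
    intro s
    have : ∀ p : κ, {c | ∃ w ∈ Z, MvPolynomial.eval w (f - MvPolynomial.C s) = 0 ∧
        w p = c}.Finite := by
      intro p
      obtain ⟨R, hR, h⟩ := hd' (MvPolynomial.X p) s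
      have := finite_values hZ (hf s) _ R rfl hR h
      simpa only [MvPolynomial.eval_X] using this
    refine (Set.Finite.pi' this).subset ?_
    rintro w ⟨hw, h0⟩ p
    exact ⟨w, hw, by simpa [sub_eq_zero] using h0, rfl⟩
  refine (h1.biUnion fun s _ => h2 s).subset ?_
  rintro w ⟨hw, h0⟩
  exact Set.mem_biUnion (x := MvPolynomial.eval w f) ⟨w, hw, h0, rfl⟩ ⟨hw, rfl⟩

end SegreCurve

namespace SegreCurve

open Polynomial Filter Topology

/-! ### Algebraic dependence from finite fibres -/

/-- The ideal of a subset of affine space. -/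
noncomputable def idl {κ : Type} (Z : Set (κ → ℂ)) : Ideal (MvPolynomial κ ℂ) :=
  MvPolynomial.vanishingIdeal ℂ Z

lemma mem_idl {κ : Type} {Z : Set (κ → ℂ)} {f : MvPolynomial κ ℂ} :
    f ∈ idl Z ↔ ∀ w ∈ Z, MvPolynomial.eval w f = 0 := Iff.rfl

lemma idl_isPrime {κ : Type} {Z : Set (κ → ℂ)} (hZ : IsIrrClosed Z) : (idl Z).IsPrime := by
  refine Ideal.isPrime_iff.2 ⟨?_, fun {x y} h => hZ.prime x y h⟩
  rw [Ne, Ideal.eq_top_iff_one, mem_idl]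
  intro h
  obtain ⟨w, hw⟩ := hZ.nonempty
  simpa using h w hw

/-- The image of a dominant map `(f, u)` from `Z` to the plane contains a nonempty principal open
set. By Chevalley's theorem, the image on spectra is constructible, and it contains the generic
point. -/
lemma exists_dense_image {κ : Type} [Finite κ] {Z : Set (κ → ℂ)} (hZ : IsIrrClosed Z)
    {f u : MvPolynomial κ ℂ} (hfu : ∀ R : ℂ[X][X], sub2 f u R ∈ idl Z → R = 0) :
    ∃ r : ℂ[X][X], r ≠ 0 ∧ ∀ p : ℂ × ℂ, ev p r ≠ 0 →
      ∃ w ∈ Z, MvPolynomial.eval w f = p.1 ∧ MvPolynomial.eval w u = p.2 := by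
  have hp := idl_isPrime hZ
  let φ : ℂ[X][X] →+* (MvPolynomial κ ℂ ⧸ idl Z) := (Ideal.Quotient.mk (idl Z)).comp (sub2 f u)
  have hinj : Function.Injective φ := by
    rw [injective_iff_map_eq_zero]
    intro R hR
    exact hfu R (Ideal.Quotient.eq_zero_iff_mem.1 hR)
  have hft : φ.FiniteType := by
    have h1 : (φ.comp (C.comp (C : ℂ →+* ℂ[X]))) =
        algebraMap ℂ (MvPolynomial κ ℂ ⧸ idl Z) := by
      ext a
      simp [φ, sub2]
      rfl
    refine RingHom.FiniteType.of_comp_finiteType (f := C.comp (C : ℂ →+* ℂ[X])) ?_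
    rw [h1]
    exact RingHom.finiteType_algebraMap.2 inferInstance
  have hfp : φ.FinitePresentation := RingHom.FinitePresentation.of_finiteType.1 hft
  obtain ⟨S, hS⟩ := PrimeSpectrum.exists_constructibleSetData_iff.2
    (PrimeSpectrum.isConstructible_range_comap hfp)
  have hbot : (⊥ : PrimeSpectrum ℂ[X][X]) ∈ S.toSet := by
    rw [hS]
    refine ⟨⊥, ?_⟩
    ext x
    simp [PrimeSpectrum.comap_asIdeal, Ideal.mem_comap, map_eq_zero_iff φ hinj]
  rw [PrimeSpectrum.ConstructibleSetData.toSet, Set.mem_iUnion₂] at hbot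
  obtain ⟨B, hB, h1, h2⟩ := hbot
  refine ⟨B.f, fun h0 => h2 ?_, fun p hpr => ?_⟩
  · rw [h0]; simp
  have hg : ∀ i, B.g i = 0 := fun i => h1 ⟨i, rfl⟩
  let q : PrimeSpectrum ℂ[X][X] := ⟨RingHom.ker (ev p), RingHom.ker_isPrime _⟩
  have hq : q ∈ S.toSet := by
    refine Set.mem_biUnion hB ⟨?_, fun h => ?_⟩
    · rintro _ ⟨i, rfl⟩
      rw [hg]
      exact Ideal.zero_mem _
    · exact hpr (h rfl)
  rw [hS] at hq
  obtain ⟨Q, hQ⟩ := hq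
  obtain ⟨m, hm, hQm⟩ := Ideal.exists_le_maximal _ Q.2.ne_top
  have hmax : (m.comap (Ideal.Quotient.mk (idl Z))).IsMaximal :=
    Ideal.comap_isMaximal_of_surjective _ Ideal.Quotient.mk_surjective
  obtain ⟨w, hw⟩ := MvPolynomial.eq_vanishingIdeal_singleton_of_isMaximal ℂ hmax
  have hmem : ∀ F, Ideal.Quotient.mk (idl Z) F ∈ m → MvPolynomial.eval w F = 0 := by
    intro F hF
    have : F ∈ m.comap (Ideal.Quotient.mk (idl Z)) := hF
    rw [hw] at this
    exact this w rfl
  have hR : ∀ R, ev p R = 0 → ev (MvPolynomial.eval w f, MvPolynomial.eval w u) R = 0 := by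
    intro R hR
    rw [← eval_sub2]
    refine hmem _ (hQm ?_)
    have : R ∈ q.asIdeal := hR
    rw [← hQ] at this
    exact this
  refine ⟨w, hZ.closed w fun F hF => hmem F ?_, ?_, ?_⟩
  · rw [Ideal.Quotient.eq_zero_iff_mem.2 (mem_idl.2 hF)]; exact Ideal.zero_mem _
  · have := hR (C (X - C p.1)) (by simp [ev])
    simpa [ev, sub_eq_zero] using this
  · have := hR (X - C (C p.2)) (by simp [ev])
    simpa [ev, sub_eq_zero] using this

/-- A function with infinitely many finite fibres is algebraically related to any other function
`u`: otherwise `u` would take all but finitely many values on a general fibre. -/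
lemma exists_relation {κ : Type} [Finite κ] {Z : Set (κ → ℂ)} (hZ : IsIrrClosed Z)
    {f : MvPolynomial κ ℂ}
    (hf : {s : ℂ | {w ∈ Z | MvPolynomial.eval w f = s}.Finite}.Infinite) (u : MvPolynomial κ ℂ) :
    ∃ R : ℂ[X][X], R ≠ 0 ∧ ∀ w ∈ Z, MvPolynomial.eval w (sub2 f u R) = 0 := by
  by_contra! hcon
  obtain ⟨r, hr, H⟩ := exists_dense_image hZ (f := f) (u := u) fun R hR => by
    by_contra hR0
    obtain ⟨w, hw, h⟩ := hcon R hR0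
    exact h (hR w hw)
  obtain ⟨k, hk⟩ : ∃ k, r.coeff k ≠ 0 := by
    by_contra! h
    exact hr (Polynomial.ext (by simpa using h))
  obtain ⟨s, hs, hsk⟩ := hf.exists_notMem_finite (Polynomial.finite_setOfPred_isRoot hk)
  have hs' : r.map (evalRingHom s) ≠ 0 := by
    intro h
    apply hsk
    have := congrArg (fun p => coeff p k) h
    simpa using this
  have hfin : {c : ℂ | (r.map (evalRingHom s)).IsRoot c}.Finite :=
    Polynomial.finite_setOfPred_isRoot hs'
  refine Set.infinite_univ (α := ℂ) ((hfin.union (hs.image (MvPolynomial.eval · u))).subset ?_)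
  intro c _
  by_cases hc : ev (s, c) r = 0
  · left
    rw [Set.mem_ofPred_eq, IsRoot.def, ← hc]
    simp [ev, evalEval, eval_map, eval₂_evalRingHom]
  · right
    obtain ⟨w, hw, h1, h2⟩ := H (s, c) hc
    exact ⟨w, ⟨hw, h1⟩, h2⟩

lemma ev_swap (a b : ℂ) (R : ℂ[X][X]) : ev (a, b) (Bivariate.swap (R := ℂ) R) = ev (b, a) R := by
  have : (ev (a, b)).comp (Bivariate.swap (R := ℂ)).toRingEquiv.toRingHom = ev (b, a) := by
    refine Polynomial.ringHom_ext' (Polynomial.ringHom_ext (fun a => ?_) ?_) ?_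
    · simp [ev, Bivariate.swap_C_C]
    · simp [ev, Bivariate.swap_X]
    · simp [ev, Bivariate.swap_Y]
  exact RingHom.congr_fun this R

/-- The relation of `exists_relation` with the two functions interchanged, and `f` translated. -/
lemma exists_relation' {κ : Type} [Finite κ] {Z : Set (κ → ℂ)} (hZ : IsIrrClosed Z)
    {f : MvPolynomial κ ℂ}
    (hf : {s : ℂ | {w ∈ Z | MvPolynomial.eval w f = s}.Finite}.Infinite) (u : MvPolynomial κ ℂ)
    (s : ℂ) :
    ∃ R : ℂ[X][X], R ≠ 0 ∧
      ∀ w ∈ Z, MvPolynomial.eval w (sub2 u (f - MvPolynomial.C s) R) = 0 := by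
  have hf' : {t : ℂ | {w ∈ Z | MvPolynomial.eval w (f - MvPolynomial.C s) = t}.Finite}.Infinite := by
    refine (hf.image (f := fun t => t - s) (fun x _ y _ h => by simpa using h)).mono ?_
    rintro _ ⟨t, ht, rfl⟩
    simpa using ht
  obtain ⟨R, hR, h⟩ := exists_relation hZ hf' u
  refine ⟨Bivariate.swap (R := ℂ) R, by simpa using hR, fun w hw => ?_⟩
  have := h w hw
  rw [eval_sub2] at this ⊢
  rw [← this]
  exact ev_swap _ _ _

end SegreCurve

namespace SegreCurve

open Polynomial Filter Topology

/-! ### A primitive element with a common denominator -/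

/-- The primitive element theorem, with an integral primitive element and with a common
denominator for the coordinates. -/
lemma exists_integral_primitive {R K κ : Type} [CommRing R] [IsDomain R] [CharZero R] [Field K]
    [Algebra R K] [FaithfulSMul R K] [Finite κ] (x : κ → K) (hx : ∀ p, IsAlgebraic R (x p))
    (hgen : ∀ S : Subfield K, (∀ r, algebraMap R K r ∈ S) → (∀ p, x p ∈ S) → S = ⊤) :
    ∃ (u : K) (h : R) (q : κ → R[X]), IsIntegral R u ∧ h ≠ 0 ∧
      ∀ p, algebraMap R K h * x p = aeval u (q p) := by
  classical
  let F := FractionRing R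
  let : Algebra F K := FractionRing.liftAlgebra R K
  have : IsScalarTower R F K := FractionRing.isScalarTower_liftAlgebra R K
  have halg : ∀ z : K, IsAlgebraic R z ↔ IsAlgebraic F z := fun z =>
    IsFractionRing.isAlgebraic_iff R F K
  have htop : ∀ L : IntermediateField F K, (∀ p, x p ∈ L) → L = ⊤ := by
    intro L hL
    have := hgen L.toSubfield (fun r => by
      rw [IsScalarTower.algebraMap_apply R F K]; exact L.algebraMap_mem _) hL
    rw [eq_top_iff]
    intro z _
    have hz : z ∈ L.toSubfield := by rw [this]; trivial
    exact hz
  have : FiniteDimensional F (IntermediateField.adjoin F (Set.range x)) := by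
    refine IntermediateField.finiteDimensional_adjoin ?_
    rintro _ ⟨p, rfl⟩
    exact ((halg _).1 (hx p)).isIntegral
  have hadj : IntermediateField.adjoin F (Set.range x) = ⊤ :=
    htop _ fun p => IntermediateField.subset_adjoin _ _ ⟨p, rfl⟩
  have : FiniteDimensional F K := by
    have e := (IntermediateField.equivOfEq hadj).trans IntermediateField.topEquiv
    exact e.toLinearEquiv.finiteDimensional
  have : CharZero F := charZero_of_injective_algebraMap (IsFractionRing.injective R F)
  obtain ⟨α, hα⟩ := Field.exists_primitive_element F K
  obtain ⟨y, hy, hu_int⟩ := ((halg α).2 (Algebra.IsAlgebraic.isAlgebraic α)).exists_integral_multiple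
  set u := y • α with hu
  have hyF : algebraMap R F y ≠ 0 := by simpa using hy
  have hu' : IntermediateField.adjoin F {u} = ⊤ := by
    rw [eq_top_iff, ← hα, IntermediateField.adjoin_simple_le_iff]
    have h1 : α = (algebraMap R F y)⁻¹ • u := by
      rw [hu, ← algebraMap_smul F y α, smul_smul, inv_mul_cancel₀ hyF, one_smul]
    rw [h1]
    exact (IntermediateField.adjoin F {u}).smul_mem (IntermediateField.mem_adjoin_simple_self F u)
  have hz : ∀ p, ∃ (h : R) (q : R[X]), h ≠ 0 ∧ algebraMap R K h * x p = aeval u q := by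
    intro p
    have h1 : x p ∈ (IntermediateField.adjoin F {u}).toSubalgebra := by
      rw [hu']; trivial
    rw [IntermediateField.adjoin_simple_toSubalgebra_of_isAlgebraic
      (Algebra.IsAlgebraic.isAlgebraic u), Algebra.adjoin_singleton_eq_range_aeval] at h1
    obtain ⟨Q, hQ⟩ := h1
    obtain ⟨b, hb, hbQ⟩ := IsLocalization.integerNormalization_spec (nonZeroDivisors R) Q
    refine ⟨b, IsLocalization.integerNormalization (nonZeroDivisors R) Q,
      nonZeroDivisors.ne_zero hb, ?_⟩
    have h2 : aeval u Q = x p := hQ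
    rw [← Polynomial.aeval_map_algebraMap F, hbQ, ← algebraMap_smul F b Q, map_smul, h2,
      algebraMap_smul, Algebra.smul_def]
  choose h q hh hq using hz
  have := Fintype.ofFinite κ
  refine ⟨u, ∏ p, h p, fun p => C (∏ p' ∈ Finset.univ.erase p, h p') * q p, hu_int,
    Finset.prod_ne_zero_iff.2 fun p _ => hh p, fun p => ?_⟩
  rw [map_mul, aeval_C, ← hq p, ← mul_assoc, ← map_mul, Finset.prod_erase_mul _ _ (Finset.mem_univ p)]

/-- Evaluation of bivariate polynomials at a pair of elements of an extension of `ℂ`. -/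
noncomputable def evK {K : Type} [Field K] [Algebra ℂ K] (t u : K) : ℂ[X][X] →+* K :=
  eval₂RingHom (aeval t).toRingHom u

/-- A finitely generated extension of `ℂ` of transcendence degree one is the function field of a
plane curve `P`, and the coordinates `x` are fractions with a common denominator. -/
lemma exists_plane {K κ : Type} [Field K] [Algebra ℂ K] [Finite κ] (x : κ → K) (t : K)
    (ht : ∀ r : ℂ[X], aeval t r = 0 → r = 0)
    (hx : ∀ p, ∃ R : ℂ[X][X], R ≠ 0 ∧ evK t (x p) R = 0)
    (hfrac : ∀ z : K, ∃ a b : MvPolynomial κ ℂ, MvPolynomial.aeval x b ≠ 0 ∧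
      z * MvPolynomial.aeval x b = MvPolynomial.aeval x a) :
    ∃ (u : K) (P : ℂ[X][X]) (h : ℂ[X]) (q : κ → ℂ[X][X]), evK t u P = 0 ∧
      (∀ G, evK t u G = 0 → P ∣ G) ∧ evK t u (derivative P) ≠ 0 ∧ h ≠ 0 ∧
      ∀ p, evK t u (C h) * x p = evK t u (q p) := by
  let : Algebra ℂ[X] K := (aeval t).toRingHom.toAlgebra
  have hmap : ∀ r : ℂ[X], algebraMap ℂ[X] K r = aeval t r := fun r => rfl
  have : FaithfulSMul ℂ[X] K := by
    rw [faithfulSMul_iff_algebraMap_injective, injective_iff_map_eq_zero]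
    exact ht
  have hev : ∀ (z : K) (G : ℂ[X][X]), evK t z G = aeval z G := fun z G => rfl
  obtain ⟨u, h, q, hu, hh, hq⟩ := exists_integral_primitive (R := ℂ[X]) x
    (fun p => by
      obtain ⟨R, hR, hR'⟩ := hx p
      exact ⟨R, hR, hR'⟩)
    (by
      intro S h1 h2
      have hS : ∀ f : MvPolynomial κ ℂ, MvPolynomial.aeval x f ∈ S := by
        intro f
        induction f using MvPolynomial.induction_on with
        | C a =>
          have := h1 (C a)
          rw [hmap, aeval_C] at this
          rwa [MvPolynomial.aeval_C]
        | add p q hp hq => rw [map_add]; exact S.add_mem hp hq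
        | mul_X p i hp => rw [map_mul, MvPolynomial.aeval_X]; exact S.mul_mem hp (h2 i)
      rw [eq_top_iff]
      intro z _
      obtain ⟨a, b, hb, hab⟩ := hfrac z
      rw [← eq_div_iff hb] at hab
      rw [hab]
      exact S.div_mem (hS a) (hS b))
  have hdvd : ∀ G, evK t u G = 0 → minpoly ℂ[X] u ∣ G := fun G hG =>
    minpoly.isIntegrallyClosed_dvd hu hG
  refine ⟨u, minpoly ℂ[X] u, h, q, minpoly.aeval _ _, hdvd, fun h0 => ?_, hh, fun p => ?_⟩
  · have h1 := hdvd _ h0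
    have h2 := minpoly.natDegree_pos hu
    have h3 : derivative (minpoly ℂ[X] u) ≠ 0 := by
      intro h3
      have := derivative_eq_zero.1 h3
      omega
    exact absurd (natDegree_le_of_dvd h1 h3) (not_le.2 (natDegree_derivative_lt h2.ne'))
  · rw [hev, hev, aeval_C]
    exact hq p

end SegreCurve

namespace SegreCurve

open Polynomial Filter Topology

/-! ### The plane model of an affine curve -/

/-- The function field of an irreducible affine variety. -/
lemma exists_functionField {κ : Type} {Z : Set (κ → ℂ)} (hZ : IsIrrClosed Z) :
    ∃ (K : Type) (_ : Field K) (_ : Algebra ℂ K) (x : κ → K),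
      (∀ F, MvPolynomial.aeval x F = 0 ↔ F ∈ idl Z) ∧
      ∀ z : K, ∃ a b : MvPolynomial κ ℂ, MvPolynomial.aeval x b ≠ 0 ∧
        z * MvPolynomial.aeval x b = MvPolynomial.aeval x a := by
  have hp := idl_isPrime hZ
  let A := MvPolynomial κ ℂ ⧸ idl Z
  let K := FractionRing A
  let θ : MvPolynomial κ ℂ →ₐ[ℂ] K :=
    (IsScalarTower.toAlgHom ℂ A K).comp (Ideal.Quotient.mkₐ ℂ (idl Z))
  have hθ : ∀ F, MvPolynomial.aeval (fun p => θ (MvPolynomial.X p)) F = θ F := by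
    intro F
    have : MvPolynomial.aeval (fun p => θ (MvPolynomial.X p)) = θ := by
      ext p
      simp
    rw [this]
  have hθ' : ∀ F, θ F = algebraMap A K (Ideal.Quotient.mk (idl Z) F) := fun F => rfl
  have h0 : ∀ F, θ F = 0 ↔ F ∈ idl Z := by
    intro F
    rw [hθ', map_eq_zero_iff _ (IsFractionRing.injective A K), Ideal.Quotient.eq_zero_iff_mem]
  refine ⟨K, inferInstance, inferInstance, fun p => θ (MvPolynomial.X p), ?_, ?_⟩
  · intro F
    rw [hθ, h0]
  · intro z
    obtain ⟨a, b, hb, rfl⟩ := IsFractionRing.div_surjective (A := A) z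
    obtain ⟨a, rfl⟩ := Ideal.Quotient.mk_surjective a
    obtain ⟨b, rfl⟩ := Ideal.Quotient.mk_surjective b
    have hb' : θ b ≠ 0 := by
      rw [hθ', Ne, map_eq_zero_iff _ (IsFractionRing.injective A K)]
      exact nonZeroDivisors.ne_zero hb
    refine ⟨a, b, ?_, ?_⟩
    · rwa [hθ]
    · rw [hθ, hθ, ← hθ', ← hθ', div_mul_cancel₀ _ hb']

lemma evK_aeval {K κ : Type} [Field K] [Algebra ℂ K] (x : κ → K) (f u : MvPolynomial κ ℂ)
    (R : ℂ[X][X]) :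
    evK (MvPolynomial.aeval x f) (MvPolynomial.aeval x u) R = MvPolynomial.aeval x (sub2 f u R) := by
  have : evK (MvPolynomial.aeval x f) (MvPolynomial.aeval x u) =
      (MvPolynomial.aeval x).toRingHom.comp (sub2 f u) := by
    refine Polynomial.ringHom_ext' (Polynomial.ringHom_ext (fun a => ?_) ?_) ?_ <;>
      simp [sub2, evK]
  exact RingHom.congr_fun this R

lemma ev_eq_eval₂ (p : ℂ × ℂ) (G : ℂ[X][X]) : ev p G = eval₂ (evalRingHom p.1) p.2 G := by
  have : ev p = eval₂RingHom (evalRingHom p.1) p.2 := by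
    refine Polynomial.ringHom_ext' (Polynomial.ringHom_ext (fun a => ?_) ?_) ?_ <;> simp [ev]
  exact RingHom.congr_fun this G

/-- A plane model of an affine curve: the point `w` of `Z` corresponds to the point
`(f w, a w / b w)` of the plane curve `P = 0`, and the coordinates of `w` are the values of the
fractions `q i / H`. -/
lemma affine_model {κ : Type} [Finite κ] {Z : Set (κ → ℂ)} (hZ : IsIrrClosed Z)
    {f : MvPolynomial κ ℂ} (hf : ∀ s : ℂ, ∃ w ∈ Z, MvPolynomial.eval w (f - MvPolynomial.C s) ≠ 0)
    (hd : ∀ u, ∃ R : ℂ[X][X], R ≠ 0 ∧ ∀ w ∈ Z, MvPolynomial.eval w (sub2 f u R) = 0)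
    (hfin : ∀ v : MvPolynomial κ ℂ, (∃ w ∈ Z, MvPolynomial.eval w v ≠ 0) →
      {w ∈ Z | MvPolynomial.eval w v = 0}.Finite) :
    ∃ (P g H : ℂ[X][X]) (q : κ → ℂ[X][X]) (a b : MvPolynomial κ ℂ),
      IsPlaneModel P g ∧
      (∀ p ∈ Gam P g, ev p H ≠ 0 ∧ ∃ w ∈ Z, (∀ i, ev p (q i) = ev p H * w i) ∧
        MvPolynomial.eval w b ≠ 0 ∧
        p = (MvPolynomial.eval w f, MvPolynomial.eval w a / MvPolynomial.eval w b)) ∧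
      {w ∈ Z | ¬ ∃ p ∈ Gam P g, ∀ i, ev p (q i) = ev p H * w i}.Finite := by
  obtain ⟨K, _, _, x, hx0, hfrac⟩ := exists_functionField hZ
  set t : K := MvPolynomial.aeval x f with ht
  have hpr := idl_isPrime hZ
  have hnot : ∀ v, MvPolynomial.aeval x v ≠ 0 → ∃ w ∈ Z, MvPolynomial.eval w v ≠ 0 := by
    intro v hv
    rw [Ne, hx0, mem_idl] at hv
    push Not at hv
    exact hv
  -- a nonconstant function on an irreducible variety is transcendental
  have htr : ∀ r : ℂ[X], aeval t r = 0 → r = 0 := by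
    intro r hr
    by_contra hr0
    obtain ⟨s, -, hs⟩ : ∃ s, s ∈ r.roots ∧ t - algebraMap ℂ K s = 0 := by
      rw [(IsAlgClosed.splits r).eq_prod_roots, map_mul, aeval_C, mul_eq_zero, or_iff_right ((_root_.map_ne_zero _).2 (leadingCoeff_ne_zero.2 hr0)),
        map_multiset_prod, Multiset.prod_eq_zero_iff] at hr
      rw [Multiset.mem_map] at hr
      obtain ⟨p, hp, hp0⟩ := hr
      rw [Multiset.mem_map] at hp
      obtain ⟨s, hs, rfl⟩ := hp
      exact ⟨s, hs, by simpa using hp0⟩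
    have : MvPolynomial.aeval x (f - MvPolynomial.C s) = 0 := by
      rw [map_sub, MvPolynomial.aeval_C, ← ht, hs]
    rw [hx0] at this
    obtain ⟨w, hw, hne⟩ := hf s
    exact hne (this w hw)
  obtain ⟨u, P, h, q, hP, hdvd, hsep, hh, hq⟩ := exists_plane x t htr
    (fun p => by
      obtain ⟨R, hR, hRZ⟩ := hd (MvPolynomial.X p)
      refine ⟨R, hR, ?_⟩
      rw [show x p = MvPolynomial.aeval (R := ℂ) x (MvPolynomial.X p) by simp, ht, evK_aeval, hx0]
      exact hRZ) hfrac
  obtain ⟨a, b, hb, hab⟩ := hfrac u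
  set E : ℂ[X][X] →+* K := evK t u with hE
  have hEC : ∀ c : ℂ, E (C (C c)) = algebraMap ℂ K c := by intro c; simp [hE, evK]
  have hEX : E (C X) = t := by simp [hE, evK]
  have hEY : E X = u := by simp [hE, evK]
  have hH0 : E (C h) ≠ 0 := by
    intro h0
    apply hh
    apply htr
    rw [← h0]
    simp [hE, evK]
  -- numerators of polynomials in the coordinates, after pulling back to the plane
  have num1 : ∀ F : MvPolynomial κ ℂ, ∃ (N : ℕ) (G : ℂ[X][X]),
      E (C h) ^ N * MvPolynomial.aeval x F = E G ∧
      ∀ p w, (∀ i, ev p (q i) = ev p (C h) * w i) →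
        ev p (C h) ^ N * MvPolynomial.eval w F = ev p G := by
    intro F
    obtain ⟨N, G, hG⟩ := exists_num (C h) q (MvPolynomial.map (C.comp (C : ℂ →+* ℂ[X])) F)
    refine ⟨N, G, ?_, fun p w hw => ?_⟩
    · rw [← hG K E x fun i => by rw [mul_comm, hq]]
      rw [MvPolynomial.eval₂_map, MvPolynomial.aeval_def]
      congr 2
      ext c
      exact (hEC c).symm
    · rw [← hG ℂ (ev p) w fun i => by rw [mul_comm, hw]]
      rw [MvPolynomial.eval₂_map, MvPolynomial.eval, MvPolynomial.coe_eval₂Hom]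
      congr 2
      ext c
      simp [ev]
  -- numerators of bivariate polynomials, after pulling back to the curve
  have num2 : ∀ G : ℂ[X][X], ∃ (N : ℕ) (F : MvPolynomial κ ℂ),
      MvPolynomial.aeval x b ^ N * E G = MvPolynomial.aeval x F ∧
      ∀ w, MvPolynomial.eval w b ≠ 0 → MvPolynomial.eval w b ^ N *
        ev (MvPolynomial.eval w f, MvPolynomial.eval w a / MvPolynomial.eval w b) G =
          MvPolynomial.eval w F := by
    intro G
    obtain ⟨N, F, hF⟩ := exists_num_poly b a (G.map (aeval f).toRingHom)
    refine ⟨N, F, ?_, fun w hw => ?_⟩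
    · have := hF K (MvPolynomial.aeval x).toRingHom u hab
      rw [eval₂_map] at this
      refine Eq.trans ?_ this
      congr 1
      rw [hE, evK, coe_eval₂RingHom]
      congr 1
      refine Polynomial.ringHom_ext (fun c => ?_) ?_ <;> simp [ht]
    · have := hF ℂ (MvPolynomial.eval w) _ (div_mul_cancel₀ (MvPolynomial.eval w a) hw)
      rw [eval₂_map] at this
      refine Eq.trans ?_ this
      congr 1
      rw [ev_eq_eval₂]
      congr 1
      refine Polynomial.ringHom_ext (fun c => ?_) ?_ <;> simp
  set ρ : (κ → ℂ) → ℂ × ℂ := fun w =>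
    (MvPolynomial.eval w f, MvPolynomial.eval w a / MvPolynomial.eval w b) with hρ
  -- `ρ` maps `Z` to the plane curve
  have hA : ∀ w ∈ Z, MvPolynomial.eval w b ≠ 0 → ∀ G, E G = 0 → ev (ρ w) G = 0 := by
    intro w hw hbw G hG
    obtain ⟨N, F, h1, h2⟩ := num2 G
    rw [hG, mul_zero, eq_comm, hx0] at h1
    have h3 := h2 w hbw
    have h4 : MvPolynomial.eval w F = 0 := h1 w hw
    rw [h4] at h3
    exact (mul_eq_zero.1 h3).resolve_left (pow_ne_zero _ hbw)
  have hEh : E (C h) = MvPolynomial.aeval x (aeval f h) := by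
    have : E (C h) = aeval t h := by simp [hE, evK]
    rw [this, ht, Polynomial.aeval_algHom_apply]
  have hevh : ∀ w, ev (ρ w) (C h) = MvPolynomial.eval w (aeval f h) := by
    intro w
    have h1 : ev (ρ w) (C h) = eval (MvPolynomial.eval w f) h := by simp [ev, hρ]
    have h2 := Polynomial.aeval_algHom_apply (MvPolynomial.aeval (R := ℂ) w) f h
    rw [h1, ← MvPolynomial.coe_aeval_eq_eval, ← Polynomial.coe_aeval_eq_eval]
    exact h2
  -- the map `p ↦ q p / H p` with `H = h` is a left inverse of `ρ`
  have hB : ∀ w ∈ Z, MvPolynomial.eval w b ≠ 0 → ∀ i, ev (ρ w) (q i) = ev (ρ w) (C h) * w i := by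
    intro w hw hbw i
    obtain ⟨N, F, h1, h2⟩ := num2 (q i)
    have h3 : MvPolynomial.aeval x (b ^ N * (aeval f h * MvPolynomial.X i) - F) = 0 := by
      rw [map_sub, map_mul, map_mul, map_pow, MvPolynomial.aeval_X, ← hEh, hq, h1, sub_self]
    rw [hx0] at h3
    have h4 := h3 w hw
    change MvPolynomial.eval w _ = 0 at h4
    rw [map_sub, map_mul, map_mul, map_pow, MvPolynomial.eval_X, ← hevh, ← h2 w hbw, sub_eq_zero]
      at h4
    exact (mul_left_cancel₀ (pow_ne_zero _ hbw) h4).symm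
  obtain ⟨Nb, B, hB1, hB2⟩ := num1 b
  -- it maps the plane curve to `Z` and is also a right inverse
  have hC : ∀ p ∈ Gam P (C h * derivative P * B), ev p (C h) ≠ 0 ∧ ∃ w ∈ Z,
      (∀ i, ev p (q i) = ev p (C h) * w i) ∧ MvPolynomial.eval w b ≠ 0 ∧ p = ρ w := by
    rintro p ⟨hpP, hpg⟩
    rw [map_mul, map_mul] at hpg
    have hp1 := left_ne_zero_of_mul (left_ne_zero_of_mul hpg)
    have hp2 := right_ne_zero_of_mul hpg
    have hdv : ∀ G, E G = 0 → ev p G = 0 := by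
      intro G hG
      obtain ⟨Q, rfl⟩ := hdvd G hG
      rw [map_mul, hpP, zero_mul]
    set w : κ → ℂ := fun i => ev p (q i) / ev p (C h) with hw
    have hqw : ∀ i, ev p (q i) = ev p (C h) * w i := fun i => by
      rw [hw]; exact (mul_div_cancel₀ _ hp1).symm
    have hbw : MvPolynomial.eval w b ≠ 0 := by
      intro h0
      have := hB2 p w hqw
      rw [h0, mul_zero] at this
      exact hp2 this.symm
    have hfw : MvPolynomial.eval w f = p.1 := by
      obtain ⟨N, G, h1, h2⟩ := num1 f
      have h3 := hdv (C h ^ N * C X - G) (by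
        rw [map_sub, map_mul, map_pow, hEX, ← h1, ← ht, sub_self])
      rw [map_sub, map_mul, map_pow, ← h2 p w hqw, sub_eq_zero] at h3
      rw [← mul_left_cancel₀ (pow_ne_zero _ hp1) h3]
      simp [ev]
    have haw : MvPolynomial.eval w a = p.2 * MvPolynomial.eval w b := by
      obtain ⟨N, G, h1, h2⟩ := num1 a
      have h3 := hdv (C h ^ Nb * G - C h ^ N * (X * B)) (by
        rw [map_sub, map_mul, map_mul, map_mul, map_pow, map_pow, hEY, ← h1, ← hB1, ← hab]
        ring)
      rw [map_sub, map_mul, map_mul, map_mul, map_pow, map_pow, ← h2 p w hqw, ← hB2 p w hqw,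
        sub_eq_zero] at h3
      have h4 : ev p X = p.2 := by simp [ev]
      rw [h4] at h3
      refine mul_left_cancel₀ (mul_ne_zero (pow_ne_zero N hp1) (pow_ne_zero Nb hp1)) ?_
      linear_combination h3
    refine ⟨hp1, w, hZ.closed w fun F hF => ?_, hqw, hbw, ?_⟩
    · obtain ⟨N, G, h1, h2⟩ := num1 F
      have h3 : MvPolynomial.aeval x F = 0 := (hx0 F).2 hF
      rw [h3, mul_zero] at h1
      have h4 := h2 p w hqw
      rw [hdv G h1.symm] at h4
      exact (mul_eq_zero.1 h4).resolve_left (pow_ne_zero _ hp1)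
    · refine Prod.ext hfw.symm ?_
      change p.2 = MvPolynomial.eval w a / MvPolynomial.eval w b
      rw [haw, mul_div_cancel_right₀ _ hbw]
  refine ⟨P, C h * derivative P * B, C h, q, a, b, ⟨?_, ?_⟩, hC, ?_⟩
  · rintro p ⟨-, hpg⟩
    rw [map_mul, map_mul] at hpg
    exact right_ne_zero_of_mul (left_ne_zero_of_mul hpg)
  · intro G
    by_cases hG : E G = 0
    · exact Or.inr (hdvd G hG)
    left
    obtain ⟨N, F, h1, h2⟩ := num2 G
    have hF := hfin F (hnot F (by rw [← h1]; exact mul_ne_zero (pow_ne_zero _ hb) hG))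
    refine (hF.image ρ).subset ?_
    rintro p ⟨hp, hpG⟩
    obtain ⟨-, w, hw, -, hbw, rfl⟩ := hC p hp
    refine ⟨w, ⟨hw, ?_⟩, rfl⟩
    rw [← h2 w hbw, show ev _ G = 0 from hpG, mul_zero]
  · obtain ⟨N, F, h1, h2⟩ := num2 (derivative P)
    have hfin' := hfin (b * aeval f h * F) (hnot _ (by
      rw [map_mul, map_mul, ← hEh, ← h1]
      exact mul_ne_zero (mul_ne_zero hb hH0) (mul_ne_zero (pow_ne_zero _ hb) hsep)))
    refine hfin'.subset ?_
    rintro w ⟨hw, hbad⟩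
    refine ⟨hw, ?_⟩
    by_contra hne
    apply hbad
    rw [map_mul, map_mul] at hne
    have hbw := left_ne_zero_of_mul (left_ne_zero_of_mul hne)
    have hhw := right_ne_zero_of_mul (left_ne_zero_of_mul hne)
    have hFw := right_ne_zero_of_mul hne
    rw [← hevh] at hhw
    rw [← h2 w hbw] at hFw
    have hqw := hB w hw hbw
    refine ⟨ρ w, ⟨hA w hw hbw P hP, ?_⟩, hqw⟩
    rw [map_mul, map_mul, ← hB2 _ _ hqw]
    exact mul_ne_zero (mul_ne_zero hhw (right_ne_zero_of_mul hFw))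
      (mul_ne_zero (pow_ne_zero _ hhw) hbw)

end SegreCurve

namespace SegreCurve

open Polynomial Filter Topology

/-! ### Affine charts -/

variable {n : Bool → ℕ} {Y : Set (PStack n)}

/-- The index set of all homogeneous coordinates. -/
abbrev Idx (n : Bool → ℕ) := (i : Bool) × Fin (n i + 1)

/-- Affine coordinates of a point in the chart where the coordinates with index `k` are nonzero. -/
noncomputable def nrm (k : SIdx n) (v : Vec n) : Idx n → ℂ := fun p => v p.1 p.2 / v p.1 (k p.1)

/-- Regrouping of the coordinates into one vector for each factor. -/
def cur (w : Idx n → ℂ) : Vec n := fun i a => w ⟨i, a⟩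

/-- The affine chart of `Y` in which the coordinates with index `k` are normalized to `1`. -/
def aff (Y : Set (PStack n)) (k : SIdx n) : Set (Idx n → ℂ) :=
  {w | (∀ i, w ⟨i, k i⟩ = 1) ∧ cur w ∈ cone Y}

lemma rep_nrm {k : SIdx n} {v : Vec n} {y : PStack n} (hv : Rep v y) (hk : ∀ i, v i (k i) ≠ 0) :
    Rep (cur (nrm k v)) y := by
  have := hv.smul (l := fun i => (v i (k i))⁻¹) fun i => inv_ne_zero (hk i)
  have h : cur (nrm k v) = fun i => (v i (k i))⁻¹ • v i := by
    funext i a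
    exact div_eq_inv_mul _ _
  rwa [h]

lemma nrm_mem {k : SIdx n} {v : Vec n} {y : PStack n} (hy : y ∈ Y) (hv : Rep v y)
    (hk : ∀ i, v i (k i) ≠ 0) : nrm k v ∈ aff Y k :=
  ⟨fun i => div_self (hk i), y, hy, rep_nrm hv hk⟩

lemma nrm_smul (k : SIdx n) (v : Vec n) {l : Bool → ℂ} (hl : ∀ i, l i ≠ 0) :
    nrm k (fun i => l i • v i) = nrm k v := by
  funext p
  exact mul_div_mul_left _ _ (hl p.1)

lemma nrm_eq {k : SIdx n} {w : Idx n → ℂ} (hw : ∀ i, w ⟨i, k i⟩ = 1) {v : Vec n} {y : PStack n}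
    (h : Rep (cur w) y) (hv : Rep v y) : (∀ i, v i (k i) ≠ 0) ∧ nrm k v = w := by
  obtain ⟨l, hl, rfl⟩ := h.exists_smul hv
  refine ⟨fun i => ?_, ?_⟩
  · have : cur w i (k i) = 1 := hw i
    simpa [this] using hl i
  · rw [nrm_smul k _ hl]
    funext p
    simp [nrm, cur, hw]

lemma exists_chart {v : Vec n} {y : PStack n} (hv : Rep v y) : ∃ k : SIdx n, ∀ i, v i (k i) ≠ 0 := by
  choose k hk using fun i => Function.ne_iff.1 (hv.ne i)
  exact ⟨k, hk⟩

/-- The hypersurface `f = 0` of a chart, together with the complement of the chart, is algebraic. -/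
lemma exists_alg (k : SIdx n) (f : MvPolynomial (Idx n) ℂ) :
    ∃ A : Set (PStack n), IsAlgebraicSet A ∧ ∀ y v, Rep v y →
      (y ∈ A ↔ (∃ i, v i (k i) = 0) ∨ MvPolynomial.eval (nrm k v) f = 0) := by
  obtain ⟨N, F, hF⟩ := exists_num (S := MvPolynomial (Idx n) ℂ) (κ := Idx n)
    (∏ i, MvPolynomial.X ⟨i, k i⟩)
    (fun p => MvPolynomial.X p * MvPolynomial.X ⟨!p.1, k !p.1⟩) (MvPolynomial.map MvPolynomial.C f)
  have key : ∀ v : Vec n,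
      MvPolynomial.eval (fun p => v p.1 p.2) (F * ∏ i, MvPolynomial.X ⟨i, k i⟩) = 0 ↔
        (∃ i, v i (k i) = 0) ∨ MvPolynomial.eval (nrm k v) f = 0 := by
    intro v
    have hb : MvPolynomial.eval (fun p : Idx n => v p.1 p.2) (∏ i, MvPolynomial.X ⟨i, k i⟩) =
        ∏ i, v i (k i) := by simp
    rw [map_mul, mul_eq_zero, hb, Finset.prod_eq_zero_iff]
    simp only [Finset.mem_univ, true_and]
    by_cases h0 : ∃ i, v i (k i) = 0
    · simp [h0]
    · have hne : ∏ i, v i (k i) ≠ 0 := by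
        rw [Ne, Finset.prod_eq_zero_iff]; simpa using h0
      have h := hF ℂ (MvPolynomial.eval fun p : Idx n => v p.1 p.2) (nrm k v) (by
        intro p
        rw [hb, Fintype.prod_bool, map_mul, MvPolynomial.eval_X, MvPolynomial.eval_X]
        push Not at h0
        obtain ⟨i, a⟩ := p
        have := h0 i
        cases i
        · change v false a / v false (k false) * (v true (k true) * v false (k false)) =
            v false a * v true (k true)
          field_simp
        · change v true a / v true (k true) * (v true (k true) * v false (k false)) =
            v true a * v false (k false)
          field_simp)
      rw [MvPolynomial.eval₂_map, hb] at h
      have hid : (MvPolynomial.eval fun p : Idx n => v p.1 p.2).comp MvPolynomial.C =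
          RingHom.id ℂ := by ext; simp
      rw [hid] at h
      change _ * MvPolynomial.eval (nrm k v) f = _ at h
      simp only [h0, false_or, or_false]
      rw [← h, mul_eq_zero, or_iff_right (pow_ne_zero _ hne)]
  generalize F * ∏ i, MvPolynomial.X ⟨i, k i⟩ = G at key
  refine ⟨{y | PolyVanish G y}, ⟨{G}, by simp only [Set.mem_singleton_iff, forall_eq]⟩,
    fun y v hv => ?_⟩
  rw [← key, Set.mem_ofPred_eq]
  constructor
  · intro h
    exact h v hv
  · intro h v' hv'
    have hr : Rep v' y := hv'
    obtain ⟨l, hl, hlv⟩ := hv.exists_smul hr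
    refine (key v').2 ?_
    rw [hlv, nrm_smul k v hl]
    exact ((key v).1 h).imp_left fun ⟨i, hi⟩ => ⟨i, by simp [hi]⟩

/-- A closed set containing a nonempty chart of `Y` contains `Y`. -/
lemma subset_of_chart (hY : IsIrredVariety Y) {k : SIdx n} (hk : (aff Y k).Nonempty)
    {A : Set (PStack n)} (hA : IsAlgebraicSet A)
    (h : ∀ y ∈ Y, ∀ v, Rep v y → (∀ i, v i (k i) ≠ 0) → y ∈ A) : Y ⊆ A := by
  obtain ⟨B, hB, hBm⟩ := exists_alg k 1
  refine (hY.2.2 A B hA hB fun y hy => ?_).resolve_right fun hYB => ?_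
  · obtain ⟨v, hv⟩ := exists_rep y
    by_cases hc : ∀ i, v i (k i) ≠ 0
    · exact Or.inl (h y hy v hv hc)
    · push Not at hc
      exact Or.inr ((hBm y v hv).2 (Or.inl hc))
  · obtain ⟨w, hw, y, hy, hr⟩ := hk
    obtain ⟨i, hi⟩ := ((hBm y _ hr).1 (hYB hy)).resolve_right (by simp)
    exact one_ne_zero ((hw i).symm.trans hi)

lemma eval_scale (l : Bool → ℂ) (w : Idx n → ℂ) (f : MvPolynomial (Idx n) ℂ) :
    MvPolynomial.eval w
        (MvPolynomial.bind₁ (fun p => MvPolynomial.C (l p.1) * MvPolynomial.X p) f) =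
      MvPolynomial.eval (fun p => l p.1 * cur w p.1 p.2) f := by
  refine (MvPolynomial.eval₂Hom_bind₁ (RingHom.id ℂ) w _ f).trans ?_
  congr 2
  funext p
  simp [cur]

lemma aff_isIrrClosed (hY : IsIrredVariety Y) {k : SIdx n} (hk : (aff Y k).Nonempty) :
    IsIrrClosed (aff Y k) := by
  refine ⟨hk, fun f g h => ?_, fun w hw => ?_⟩
  · obtain ⟨A, hA, hAm⟩ := exists_alg k f
    obtain ⟨B, hB, hBm⟩ := exists_alg k g
    have hsub : ∀ (f : MvPolynomial (Idx n) ℂ) (A : Set (PStack n)),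
        (∀ y v, Rep v y → (y ∈ A ↔ (∃ i, v i (k i) = 0) ∨ MvPolynomial.eval (nrm k v) f = 0)) →
        Y ⊆ A → ∀ w ∈ aff Y k, MvPolynomial.eval w f = 0 := by
      rintro f A hAm hYA w ⟨hw, y, hy, hr⟩
      have h1 := nrm_eq hw hr hr
      have h2 := (hAm y _ hr).1 (hYA hy)
      rw [h1.2] at h2
      exact h2.resolve_left fun ⟨i, hi⟩ => h1.1 i hi
    refine (hY.2.2 A B hA hB fun y hy => ?_).imp (hsub f A hAm) (hsub g B hBm)
    obtain ⟨v, hv⟩ := exists_rep y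
    rw [Set.mem_union, hAm y v hv, hBm y v hv]
    by_cases hc : ∃ i, v i (k i) = 0
    · exact Or.inl (Or.inl hc)
    · push Not at hc
      have := h _ (nrm_mem hy hv hc)
      rw [map_mul, mul_eq_zero] at this
      exact this.imp Or.inr Or.inr
  · have h1 : ∀ i, w ⟨i, k i⟩ = 1 := by
      intro i
      have := hw (MvPolynomial.X ⟨i, k i⟩ - 1) fun z hz => by simp [hz.1 i]
      simpa [sub_eq_zero] using this
    refine ⟨h1, ?_⟩
    obtain ⟨F, hF⟩ := cone_eq hY.1
    rw [hF]
    refine ⟨fun i h0 => ?_, fun f hf l hl => ?_⟩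
    · have : cur w i (k i) = 1 := h1 i
      rw [h0] at this
      exact zero_ne_one this
    · have := hw (MvPolynomial.bind₁ (fun p => MvPolynomial.C (l p.1) * MvPolynomial.X p) f) (by
        intro z hz
        have h2 : cur z ∈ cone Y := hz.2
        rw [hF] at h2
        have h3 := h2.2 f hf l hl
        rw [eval_scale]
        exact h3)
      rw [eval_scale] at this
      exact this

/-! ### Charts of curves -/

/-- A linear form of the factor `i`, as a polynomial in all coordinates. -/
noncomputable def lin (i : Bool) (a : Fin (n i + 1) → ℂ) : MvPolynomial (Idx n) ℂ :=
  ∑ c, MvPolynomial.C (a c) * MvPolynomial.X ⟨i, c⟩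

lemma eval_lin (i : Bool) (a : Fin (n i + 1) → ℂ) (w : Idx n → ℂ) :
    MvPolynomial.eval w (lin i a) = ∑ c, a c * cur w i c := by
  simp [lin, cur]

/-- Some factor whose general linear form cuts `Y` in a finite nonempty set. -/
lemma exists_direction (hdim : dimOf Y = 1) : ∃ (i : Bool) (U : Set (Fin (n i + 1) → ℂ)),
    IsOpen U ∧ Dense U ∧ ∀ a ∈ U, (hypL Y i a).Finite ∧ (hypL Y i a).Nonempty := by
  have hne : {m | ∃ e ∈ MDim Y, ∑ i, e i = m}.Nonempty := by
    by_contra h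
    rw [Set.not_nonempty_iff_eq_empty] at h
    rw [dimOf, h] at hdim
    simp at hdim
  have hbd : BddAbove {m | ∃ e ∈ MDim Y, ∑ i, e i = m} := by
    refine ⟨∑ i, n i, ?_⟩
    rintro _ ⟨e, he, rfl⟩
    exact Finset.sum_le_sum fun i _ => he.1 i
  have := Nat.sSup_mem hne hbd
  rw [← dimOf, hdim] at this
  obtain ⟨e, he, hs⟩ := this
  obtain ⟨i, hei, hej⟩ : ∃ i, e i = 1 ∧ e (!i) = 0 := by
    rw [Fintype.sum_bool] at hs
    rcases Nat.eq_zero_or_pos (e true) with h | h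
    · exact ⟨false, by omega, by simpa using h⟩
    · exact ⟨true, by omega, by simp; omega⟩
  obtain ⟨-, U, hUo, hUd, hU⟩ := he
  refine ⟨i, proj e i hei '' U, isOpenMap_proj e i hei U hUo,
    (proj_surjective e i hei).denseRange.dense_image (continuous_proj e i hei) hUd, ?_⟩
  rintro _ ⟨L, hL, rfl⟩
  rw [← inter_sliceZeros e i hei hej]
  exact hU L hL

/-- On every chart, a general linear form of the factor `i` has infinitely many finite fibres, since
subtracting a multiple of the normalized coordinate gives another general form. -/
lemma fiber_finite {i : Bool} {k : SIdx n} {U : Set (Fin (n i + 1) → ℂ)} (hUo : IsOpen U)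
    (hU : ∀ a ∈ U, (hypL Y i a).Finite) {a : Fin (n i + 1) → ℂ} (ha : a ∈ U) :
    {s : ℂ | {w ∈ aff Y k | MvPolynomial.eval w (lin i a) = s}.Finite}.Infinite := by
  have hc : Continuous fun s : ℂ => a - s • (Pi.single (k i) 1 : Fin (n i + 1) → ℂ) := by fun_prop
  have hn : (fun s : ℂ => a - s • (Pi.single (k i) 1 : Fin (n i + 1) → ℂ)) ⁻¹' U ∈ 𝓝 (0 : ℂ) :=
    (hUo.preimage hc).mem_nhds (by simpa using ha)
  refine (infinite_of_mem_nhds _ hn).mono fun s hs => ?_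
  choose r hr using exists_rep (n := n)
  refine ((hU _ hs).image fun y => nrm k (r y)).subset ?_
  rintro w ⟨⟨hw, y, hy, hwy⟩, hws⟩
  refine ⟨y, (mem_hypL hwy _ _).2 ⟨hy, ?_⟩, (nrm_eq hw hwy (hr y)).2⟩
  rw [eval_lin] at hws
  have h1 : cur w i (k i) = 1 := hw i
  simp [sub_mul, Finset.sum_sub_distrib, hws, Pi.single_apply, h1]

/-- Some general linear form of the factor `i` is nonconstant on a given nonempty chart. -/
lemma exists_nonconst (hY : IsIrredVariety Y) {i : Bool} {k : SIdx n} (hk : (aff Y k).Nonempty)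
    {U : Set (Fin (n i + 1) → ℂ)} (hUd : Dense U) (hU : ∀ a ∈ U, (hypL Y i a).Nonempty) :
    ∃ a ∈ U, ∀ s : ℂ, ∃ w ∈ aff Y k, MvPolynomial.eval w (lin i a - MvPolynomial.C s) ≠ 0 := by
  by_contra! hcon
  obtain ⟨w₀, hw₀⟩ := hk
  set ξ := cur w₀ i with hξ
  have hξ1 : ξ (k i) = 1 := hw₀.1 i
  -- if all these functions are constant, then so is the projection to the factor `i`
  have hconst : ∀ w ∈ aff Y k, cur w i = ξ := by
    intro w hw
    have h1 : (fun a : Fin (n i + 1) → ℂ => ∑ c, a c * (cur w i c - ξ c)) = fun _ => 0 := by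
      refine Continuous.ext_on hUd (by fun_prop) continuous_const fun a ha => ?_
      obtain ⟨s, hs⟩ := hcon a ha
      have e1 := hs w hw
      have e2 := hs w₀ hw₀
      rw [map_sub, eval_lin, MvPolynomial.eval_C] at e1 e2
      simp only [mul_sub, Finset.sum_sub_distrib]
      linear_combination e1 - e2
    funext c
    have := congrFun h1 (Pi.single c 1)
    simpa [Pi.single_apply, sub_eq_zero] using this
  let T : Fin (n i + 1) × Fin (n i + 1) → MvPolynomial (Idx n) ℂ := fun b =>
    MvPolynomial.X ⟨i, b.1⟩ * MvPolynomial.C (ξ b.2) -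
      MvPolynomial.X ⟨i, b.2⟩ * MvPolynomial.C (ξ b.1)
  have hsub := subset_of_chart hY ⟨w₀, hw₀⟩ (A := {y | ∀ f ∈ Set.range T, PolyVanish f y})
    ⟨_, rfl⟩ (by
      rintro y hy v hv hvk _ ⟨b, rfl⟩ v' hv'
      obtain ⟨l, hl, rfl⟩ := hv.exists_smul hv'
      have h1 := hconst _ (nrm_mem hy hv hvk)
      have h2 : ∀ c, v i c = v i (k i) * ξ c := by
        intro c
        rw [← h1]
        exact (mul_div_cancel₀ _ (hvk i)).symm
      simp [T, h2 b.1, h2 b.2]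
      ring)
  obtain ⟨a, haO, haU⟩ := hUd.inter_open_nonempty {a | ∑ c, a c * ξ c ≠ 0}
    (isOpen_ne_fun (by fun_prop) continuous_const) ⟨Pi.single (k i) 1, by simp [Pi.single_apply, hξ1]⟩
  obtain ⟨y, hy⟩ := hU a haU
  obtain ⟨v, hv⟩ := exists_rep y
  rw [mem_hypL hv] at hy
  apply hv.ne i
  funext b
  refine (mul_eq_zero.1 (?_ : (∑ c, a c * ξ c) * v i b = 0)).resolve_left haO
  rw [← zero_mul (ξ b), ← hy.2, Finset.sum_mul, Finset.sum_mul]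
  refine Finset.sum_congr rfl fun c _ => ?_
  have := hsub hy.1 _ ⟨(c, b), rfl⟩ v hv
  simp [T] at this
  linear_combination -a c * this

/-- Every nonempty chart of a curve is a one-dimensional affine variety. -/
lemma chart_curve (hY : IsIrredVariety Y) (hdim : dimOf Y = 1) {k : SIdx n}
    (hk : (aff Y k).Nonempty) : ∃ f : MvPolynomial (Idx n) ℂ,
      (∀ s : ℂ, ∃ w ∈ aff Y k, MvPolynomial.eval w (f - MvPolynomial.C s) ≠ 0) ∧
      (∀ u, ∃ R : ℂ[X][X], R ≠ 0 ∧ ∀ w ∈ aff Y k, MvPolynomial.eval w (sub2 f u R) = 0) ∧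
      ∀ v, (∃ w ∈ aff Y k, MvPolynomial.eval w v ≠ 0) →
        {w ∈ aff Y k | MvPolynomial.eval w v = 0}.Finite := by
  obtain ⟨i, U, hUo, hUd, hU⟩ := exists_direction hdim
  obtain ⟨a, ha, hf⟩ := exists_nonconst hY hk hUd fun a ha => (hU a ha).2
  have hZ := aff_isIrrClosed hY hk
  have hfin := fiber_finite (k := k) hUo (fun a ha => (hU a ha).1) ha
  exact ⟨lin i a, hf, exists_relation hZ hfin, fun v hv =>
    finite_zeros hZ hf (exists_relation hZ hfin) (exists_relation' hZ hfin) hv⟩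

/-- Only finitely many points of a curve lie outside a given nonempty chart. -/
lemma finite_outside (hY : IsIrredVariety Y) (hdim : dimOf Y = 1) {j : SIdx n}
    (hj : (aff Y j).Nonempty) :
    {y ∈ Y | ¬ ∃ v, Rep v y ∧ ∀ i, v i (j i) ≠ 0}.Finite := by
  choose r hr using exists_rep (n := n)
  have hcov : {y ∈ Y | ¬ ∃ v, Rep v y ∧ ∀ i, v i (j i) ≠ 0} ⊆
      ⋃ k : SIdx n, {y ∈ Y | (¬ ∃ v, Rep v y ∧ ∀ i, v i (j i) ≠ 0) ∧ ∀ i, r y i (k i) ≠ 0} := by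
    rintro y ⟨hy, h⟩
    obtain ⟨k, hk⟩ := exists_chart (hr y)
    exact Set.mem_iUnion.2 ⟨k, hy, h, hk⟩
  refine (Set.finite_iUnion fun k => ?_).subset hcov
  rcases (aff Y k).eq_empty_or_nonempty with hk | hk
  · refine Set.finite_empty.subset ?_
    rintro y ⟨hy, -, h⟩
    have := nrm_mem hy (hr y) h
    rwa [hk] at this
  obtain ⟨-, -, -, hfin⟩ := chart_curve hY hdim hk
  obtain ⟨B, hB, hBm⟩ := exists_alg j 1
  have hzero := hfin (∏ i, MvPolynomial.X ⟨i, j i⟩) (by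
    -- otherwise `Y` lies in the complement of the chart `j`
    by_contra! h0
    have hYB := subset_of_chart hY hk hB (by
      intro y hy v hv hvk
      have := h0 _ (nrm_mem hy hv hvk)
      simp only [map_prod, MvPolynomial.eval_X, Finset.prod_eq_zero_iff, Finset.mem_univ,
        true_and] at this
      obtain ⟨i, hi⟩ := this
      exact (hBm y v hv).2 (Or.inl ⟨i, (div_eq_zero_iff.1 hi).resolve_right (hvk i)⟩))
    obtain ⟨w, hw, y, hy, hwy⟩ := hj
    obtain ⟨i, hi⟩ := ((hBm y _ hwy).1 (hYB hy)).resolve_right (by simp)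
    exact one_ne_zero ((hw i).symm.trans hi))
  refine Set.Finite.of_injOn (f := fun y => nrm k (r y)) ?_ ?_ hzero
  · rintro y ⟨hy, h, hk⟩
    refine ⟨nrm_mem hy (hr y) hk, ?_⟩
    push Not at h
    obtain ⟨i, hi⟩ := h _ (hr y)
    rw [map_prod]
    exact Finset.prod_eq_zero (Finset.mem_univ i) (by simp [nrm, hi])
  · rintro y ⟨-, -, h1⟩ y' ⟨-, -, h2⟩ he
    have e1 := rep_nrm (hr y) h1
    have e2 := rep_nrm (hr y') h2
    rw [← show nrm k (r y) = nrm k (r y') from he] at e2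
    exact e1.unique e2

/-- Every irreducible curve in biprojective space has a plane model. -/
lemma exists_model (hY : IsIrredVariety Y) (hdim : dimOf Y = 1) :
    ∃ (P g : ℂ[X][X]) (X : Idx n → ℂ[X][X]), IsModel Y P g X := by
  obtain ⟨j, hj⟩ : ∃ j : SIdx n, (aff Y j).Nonempty := by
    obtain ⟨y, hy⟩ := hY.2.1
    obtain ⟨v, hv⟩ := exists_rep y
    obtain ⟨j, hj⟩ := exists_chart hv
    exact ⟨j, _, nrm_mem hy hv hj⟩
  obtain ⟨f, hf, hd, hfin⟩ := chart_curve hY hdim hj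
  obtain ⟨P, g, H, q, a, b, hPM, hmaps, hbad⟩ :=
    affine_model (aff_isIrrClosed hY hj) hf hd hfin
  have hrep : ∀ p ∈ Gam P g, ∀ (w : Idx n → ℂ), (∀ i, ev p (q i) = ev p H * w i) →
      ∀ y, Rep (cur w) y → Rep (evX q p) y := by
    intro p hp w hw y hy
    have := hy.smul (l := fun _ => ev p H) fun _ => (hmaps p hp).1
    have h : evX q p = fun i => ev p H • cur w i := by
      funext i c
      exact hw ⟨i, c⟩
    rwa [h]
  refine ⟨P, g, q, hPM, ?_, ?_, ?_, ?_⟩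
  · intro p hp
    obtain ⟨-, w, ⟨-, y, hy, hwy⟩, hqw, -⟩ := hmaps p hp
    exact ⟨y, hy, hrep p hp w hqw y hwy⟩
  · choose r hr using exists_rep (n := n)
    have h1 : {y ∈ Y | (∀ i, r y i (j i) ≠ 0) ∧
        ¬ ∃ p ∈ Gam P g, Rep (evX q p) y}.Finite := by
      refine Set.Finite.of_injOn (f := fun y => nrm j (r y)) ?_ ?_ hbad
      · rintro y ⟨hy, hyj, h⟩
        refine ⟨nrm_mem hy (hr y) hyj, ?_⟩
        rintro ⟨p, hp, hw⟩
        exact h ⟨p, hp, hrep p hp _ hw y (rep_nrm (hr y) hyj)⟩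
      · rintro y ⟨-, h1, -⟩ y' ⟨-, h2, -⟩ he
        have e1 := rep_nrm (hr y) h1
        have e2 := rep_nrm (hr y') h2
        rw [← show nrm j (r y) = nrm j (r y') from he] at e2
        exact e1.unique e2
    refine (h1.union (finite_outside hY hdim hj)).subset ?_
    rintro y ⟨hy, h⟩
    by_cases hyj : ∃ v, Rep v y ∧ ∀ i, v i (j i) ≠ 0
    · obtain ⟨v, hv, hvj⟩ := hyj
      obtain ⟨l, hl, hlv⟩ := (hr y).exists_smul hv
      refine Or.inl ⟨hy, fun i h0 => hvj i ?_, h⟩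
      rw [hlv]
      simp [h0]
    · exact Or.inr ⟨hy, hyj⟩
  · refine ⟨fun v => (MvPolynomial.eval (nrm j v) f,
      MvPolynomial.eval (nrm j v) a / MvPolynomial.eval (nrm j v) b), fun p hp v y hpy hv => ?_⟩
    obtain ⟨-, w, ⟨hw, y', -, hwy⟩, hqw, hb, hpe⟩ := hmaps p hp
    obtain rfl := (hrep p hp w hqw y' hwy).unique hpy
    obtain ⟨hvj, hnw⟩ := nrm_eq hw hwy hv
    refine ⟨by beta_reduce; rw [hnw, hpe], ?_⟩
    have hc : ContinuousAt (nrm j) v := by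
      refine continuousAt_pi.2 fun p => ?_
      have hcc : ∀ c, ContinuousAt (fun v : Vec n => v p.1 c) v := fun c =>
        ((continuous_apply c).comp (continuous_apply p.1)).continuousAt
      exact (hcc _).div (hcc _) (hvj p.1)
    have hcf : ∀ F : MvPolynomial (Idx n) ℂ,
        ContinuousAt (fun v => MvPolynomial.eval (nrm j v) F) v := fun F =>
      ContinuousAt.comp (g := fun w => MvPolynomial.eval w F)
        (MvPolynomial.continuous_eval F).continuousAt hc
    exact (hcf f).prodMk ((hcf a).div (hcf b) (by rw [hnw]; exact hb))
  · refine ⟨j, fun p hp i => ?_⟩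
    obtain ⟨hH, w, ⟨hw, -⟩, hqw, -⟩ := hmaps p hp
    rw [hqw, hw i, mul_one]
    exact hH

end SegreCurve

/-- For an irreducible multiprojective curve
`Y ⊂ ℙ^{n₁} × ℙ^{n₂}`, the degree of its Segre embedding equals
`Deg_Y(1,0) + Deg_Y(0,1)`. -/
theorem segre_degree_of_curve {n : Bool → ℕ}
    (Y : Set (PStack n)) (hY : IsIrredVariety Y) (hdim : dimOf Y = 1)
    (σ : PStack n → Projectivization ℂ (((i : Bool) → Fin (n i + 1)) → ℂ))
    (hσ : IsSegreMap n σ)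
    (d₁ d₂ : ℕ)
    (hd₁ : ((fun t => if t then 0 else 1) : Bool → ℕ) ∈ MDim Y →
      DegIs Y (fun t => if t then 0 else 1) d₁)
    (hd₁' : ((fun t => if t then 0 else 1) : Bool → ℕ) ∉ MDim Y → d₁ = 0)
    (hd₂ : ((fun t => if t then 1 else 0) : Bool → ℕ) ∈ MDim Y →
      DegIs Y (fun t => if t then 1 else 0) d₂)
    (hd₂' : ((fun t => if t then 1 else 0) : Bool → ℕ) ∉ MDim Y → d₂ = 0) :
    ProjDegIs (σ '' Y) 1 (d₁ + d₂) := by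
  obtain ⟨P, g, X, M⟩ := SegreCurve.exists_model hY hdim
  exact SegreCurve.final_of_model hY.1 M σ hσ d₁ d₂ hd₁ hd₁' hd₂ hd₂'
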